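/- arXiv:2410.23270 — 10 statements merged into one kernel-verified Lean document; each statement's English description precedes it below -/
import Mathlib

section
/- Let M = (X, P, π) be a reversible finite Markov chain satisfying a Poincaré inequality with constant δ > 0. Then for every unit vector ψ ∈ ℝ^X, (1 − ⟨ψ| D(P) |ψ⟩)/δ ≥ TV(ψ², π)², where ψ² is the distribution with ψ²(x) = ψ(x)² and TV(μ,ν) = (1/2)·Σ_x |μ(x) − ν(x)| is the total variation distance. -/
open Matrix Finset

noncomputable section

variable {X : Type*} [Fintype X] [DecidableEq X]

/-- A finite Markov chain: a row-stochastic matrix `P` together with a fully supported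
stationary distribution `π`. -/
structure IsMarkov (P : Matrix X X ℝ) (π : X → ℝ) : Prop where
  nonneg : ∀ x y, 0 ≤ P x y
  rowSum : ∀ x, ∑ y, P x y = 1
  pi_pos : ∀ x, 0 < π x
  pi_sum : ∑ x, π x = 1
  stationary : ∀ y, ∑ x, π x * P x y = π y

/-- Detailed balance / reversibility. -/
def IsReversible (P : Matrix X X ℝ) (π : X → ℝ) : Prop :=
  ∀ x y, π x * P x y = π y * P y x

/-- The discriminant matrix `D(P)_{xy} = sqrt (π x / π y) * P x y`. -/
def discMat (P : Matrix X X ℝ) (π : X → ℝ) : Matrix X X ℝ :=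
  Matrix.of fun x y => Real.sqrt (π x / π y) * P x y

/-- The vector with entries `sqrt (π x)`. -/
def sqrtVec (π : X → ℝ) : X → ℝ := fun x => Real.sqrt (π x)

/-- `g_η (x) = min 0 ((x + 1 - η)/η)`. -/
def gEta (η x : ℝ) : ℝ := min 0 ((x + 1 - η) / η)

/-- `f (x) = - g_η (-x)`. -/
def fEta (η x : ℝ) : ℝ := -gEta η (-x)

/-- The diagonal matrix `G_η` with entries `g_η (H z / |E*|)`. -/
def GEtaMat (η : ℝ) (H : X → ℝ) (Estar : ℝ) : Matrix X X ℝ :=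
  Matrix.diagonal fun z => gEta η (H z / |Estar|)

/-- The short-path Hamiltonian `H_b = -D(P) + b • G_η`. -/
def shortPathHam (P : Matrix X X ℝ) (π : X → ℝ) (b η : ℝ) (H : X → ℝ) (Estar : ℝ) :
    Matrix X X ℝ :=
  -discMat P π + b • GEtaMat η H Estar

/-- The projector `Π_⊥ = 1 - |√π⟩⟨√π|`. -/
def projPerp (π : X → ℝ) : Matrix X X ℝ :=
  1 - Matrix.vecMulVec (sqrtVec π) (sqrtVec π)

/-- `π(E*)`: the stationary mass of the set of global minimisers of `H`. -/
def piStar (π H : X → ℝ) (Estar : ℝ) : ℝ :=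
  ∑ x, Set.indicator {y | H y = Estar} π x

/-- The stationary mass of the sublevel set `{H ≤ t}`. -/
def massLE (π H : X → ℝ) (t : ℝ) : ℝ :=
  ∑ x, Set.indicator {y | H y ≤ t} π x

/-- The Dirichlet form `D(f,f) = ⟨f, (I - P) f⟩_π`. -/
def dirichletForm (P : Matrix X X ℝ) (π f : X → ℝ) : ℝ :=
  ∑ x, π x * (f x * (f x - P.mulVec f x))

/-- `Ent_π (f) = E_π[f ln f] - E_π[f] ln (E_π[f])`. -/
def entPi (π f : X → ℝ) : ℝ :=
  (∑ x, π x * (f x * Real.log (f x))) - (∑ x, π x * f x) * Real.log (∑ x, π x * f x)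

/-- `Var_π (f) = E_π[f²] - (E_π[f])²`. -/
def varPi (π f : X → ℝ) : ℝ :=
  (∑ x, π x * f x ^ 2) - (∑ x, π x * f x) ^ 2

/-- Log-Sobolev inequality with constant `ω`. -/
def LogSobolev (P : Matrix X X ℝ) (π : X → ℝ) (ω : ℝ) : Prop :=
  ∀ f : X → ℝ, ω * entPi π (fun x => f x ^ 2) ≤ dirichletForm P π f

/-- Poincaré inequality with constant `δ`. -/
def Poincare (P : Matrix X X ℝ) (π : X → ℝ) (δ : ℝ) : Prop :=
  ∀ f : X → ℝ, δ * varPi π f ≤ dirichletForm P π f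

/-- Kullback–Leibler divergence of finitely supported densities. -/
def klDiv (μ ν : X → ℝ) : ℝ := ∑ x, μ x * Real.log (μ x / ν x)

/-- Total variation distance of finitely supported densities. -/
def tvDist (μ ν : X → ℝ) : ℝ := (∑ x, |μ x - ν x|) / 2

/-- The `θ` short-path condition at `b`: the smallest eigenvalue of `Π_⊥ H_b Π_⊥` is
at least `-1 + θ`, expressed via the Rayleigh quotient. -/
def ShortPathCond (P : Matrix X X ℝ) (π : X → ℝ) (b η : ℝ) (H : X → ℝ) (Estar θ : ℝ) :
    Prop :=
  ∀ v : X → ℝ,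
    (-1 + θ) * (∑ x, v x * v x) ≤
      ∑ x, v x * (projPerp π * shortPathHam P π b η H Estar * projPerp π).mulVec v x

/-- `Δ`-stability of the cost function `H` under the chain `P`. -/
def DeltaStable (P : Matrix X X ℝ) (H : X → ℝ) (Estar η Δ : ℝ) : Prop :=
  ∀ x, ∑ y, P x y * gEta η (H y / |Estar|) ≤ gEta η ((H x + Δ) / |Estar|)

/-- The `α`-subdepolarizing property of the pair `(P, H)`. -/
def Subdepolarizing (P : Matrix X X ℝ) (H : X → ℝ) (Estar η α : ℝ) : Prop :=
  ∀ (T : ℕ) (c : Fin T → ℝ), (∀ t, c t ∈ Set.Ioo (0:ℝ) 1) →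
    ∀ x, (∏ t, fEta η (c t * (1 - α) * H x / Estar)) ≤
      ∑ y, P x y * ∏ t, fEta η (c t * H y / Estar)

/-- The `P`-pseudo-Lipschitz norm `‖H‖_P = max_x Σ_y P x y (H x - H y)²`. -/
def pseudoLipNorm [Nonempty X] (P : Matrix X X ℝ) (H : X → ℝ) : ℝ :=
  univ.sup' univ_nonempty fun x => ∑ y, P x y * (H x - H y) ^ 2

/-- Poincaré inequality implies the total-variation bound
`(1 - ⟨ψ|D(P)|ψ⟩)/δ ≥ TV(ψ², π)²` for every unit vector `ψ`. -/
theorem stmt_2 {X : Type*} [Fintype X] [DecidableEq X]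
    (P : Matrix X X ℝ) (π : X → ℝ) (hM : IsMarkov P π) (hrev : IsReversible P π)
    (δ : ℝ) (hδ : 0 < δ) (hPI : Poincare P π δ)
    (ψ : X → ℝ) (hψ : ∑ x, ψ x * ψ x = 1) :
    tvDist (fun x => ψ x ^ 2) π ^ 2 ≤ (1 - ∑ x, ψ x * (discMat P π).mulVec ψ x) / δ := by
  have hsq : ∀ x, 0 < Real.sqrt (π x) := fun x => Real.sqrt_pos.mpr (hM.pi_pos x)
  have hss : ∀ x, Real.sqrt (π x) * Real.sqrt (π x) = π x :=
    fun x => Real.mul_self_sqrt (hM.pi_pos x).le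
  have h := hPI (fun x => ψ x / Real.sqrt (π x))
  have hD : dirichletForm P π (fun x => ψ x / Real.sqrt (π x)) =
      1 - ∑ x, ψ x * (discMat P π).mulVec ψ x := by
    rw [← hψ, ← Finset.sum_sub_distrib]
    unfold dirichletForm
    refine Finset.sum_congr rfl fun x _ => ?_
    have h1 : (discMat P π).mulVec ψ x =
        Real.sqrt (π x) * P.mulVec (fun x => ψ x / Real.sqrt (π x)) x := by
      simp only [Matrix.mulVec, dotProduct, discMat, Matrix.of_apply, Finset.mul_sum]
      refine Finset.sum_congr rfl fun y _ => ?_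
      rw [Real.sqrt_div (hM.pi_pos x).le]
      ring
    rw [h1]
    generalize P.mulVec (fun x => ψ x / Real.sqrt (π x)) x = m
    have hne := (hsq x).ne'
    rw [← hss x]
    simp only [Real.sqrt_mul_self (hsq x).le]
    field_simp
  set s := ∑ x, Real.sqrt (π x) * ψ x with hs
  have hV : varPi π (fun x => ψ x / Real.sqrt (π x)) = 1 - s ^ 2 := by
    unfold varPi
    rw [← hψ, hs]
    congr 1
    · refine Finset.sum_congr rfl fun x _ => ?_
      have hne := (hM.pi_pos x).ne'
      rw [div_pow, Real.sq_sqrt (hM.pi_pos x).le]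
      field_simp
    · congr 1
      refine Finset.sum_congr rfl fun x _ => ?_
      have hne := (hsq x).ne'
      nth_rewrite 1 [← hss x]
      field_simp
  have hA : ∑ x, |ψ x - Real.sqrt (π x)| ^ 2 = 2 - 2 * s := by
    have : (2 : ℝ) - 2 * s = ∑ x, ψ x * ψ x + ∑ x, π x - 2 * s := by
      rw [hψ, hM.pi_sum]; ring
    rw [this, hs, Finset.mul_sum, ← Finset.sum_add_distrib, ← Finset.sum_sub_distrib]
    refine Finset.sum_congr rfl fun x _ => ?_
    rw [sq_abs]
    linear_combination hss x
  have hB : ∑ x, |ψ x + Real.sqrt (π x)| ^ 2 = 2 + 2 * s := by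
    have : (2 : ℝ) + 2 * s = ∑ x, ψ x * ψ x + ∑ x, π x + 2 * s := by
      rw [hψ, hM.pi_sum]; ring
    rw [this, hs, Finset.mul_sum, ← Finset.sum_add_distrib, ← Finset.sum_add_distrib]
    refine Finset.sum_congr rfl fun x _ => ?_
    rw [sq_abs]
    linear_combination hss x
  have hCS := Finset.sum_mul_sq_le_sq_mul_sq Finset.univ
    (fun x => |ψ x - Real.sqrt (π x)|) (fun x => |ψ x + Real.sqrt (π x)|)
  rw [hA, hB] at hCS
  have hT : ∑ x, |ψ x ^ 2 - π x| =
      ∑ x, |ψ x - Real.sqrt (π x)| * |ψ x + Real.sqrt (π x)| := by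
    refine Finset.sum_congr rfl fun x _ => ?_
    rw [← abs_mul]
    congr 1
    linear_combination hss x
  rw [hD, hV] at h
  rw [le_div_iff₀ hδ]
  have hTV : tvDist (fun x => ψ x ^ 2) π ^ 2 ≤ 1 - s ^ 2 := by
    unfold tvDist
    simp only [hT]
    nlinarith [hCS]
  nlinarith [mul_le_mul_of_nonneg_left hTV hδ.le]
end
end

section
/- Let M = (X, P, π) be a reversible finite Markov chain satisfying a log-Sobolev inequality with constant ω ∈ (0,1), and let H : X → ℝ have minimum E* < 0 with π(E*) < 1. Fix η ∈ (0,1) and γ ∈ (0,1], and suppose H satisfies the γ spectral density condition: π({x : H(x) ≤ (1−η)E*}) ≤ π(E*)^γ. Then for every b with 0 < b < (2/3)·γ·ω·ln(1/π(E*)), the ω/2 short-path condition holds at b, i.e. the smallest eigenvalue of Π_⊥ H_b Π_⊥ is at least −1 + ω/2, where H_b = −D(P) + b·G_η and Π_⊥ = I − |√π⟩⟨√π|. -/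
open Matrix Finset

noncomputable section

variable {X : Type*} [Fintype X] [DecidableEq X]

lemma sp_log_ge {y k : ℝ} (hy : 0 ≤ y) (hk : 0 < k) :
    y * Real.log k + y - k ≤ y * Real.log y := by
  rcases hy.eq_or_lt with rfl | hy
  · simp; exact hk.le
  have h := Real.log_le_sub_one_of_pos (div_pos hk hy)
  rw [Real.log_div hk.ne' hy.ne'] at h
  have h2 := mul_le_mul_of_nonneg_left h hy.le
  have : y * (k / y - 1) = k - y := by field_simp
  nlinarith

/-- pointwise tangent -/
lemma sp_pt {x x0 ρ : ℝ} (hx : 0 < x) (hx0 : 0 < x0) (hρ : 0 ≤ ρ) :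
    x ^ 2 * Real.log (x0 ^ 2) - 2 * x * (x0 - x) - ρ * (x0 - x) ^ 2
      ≤ x ^ 2 * Real.log (x ^ 2) := by
  have h := Real.log_le_sub_one_of_pos (div_pos hx0 hx)
  rw [Real.log_div hx0.ne' hx.ne'] at h
  rw [Real.log_pow, Real.log_pow]
  push_cast
  have h2 := mul_le_mul_of_nonneg_left h (sq_nonneg x)
  have : x ^ 2 * (x0 / x - 1) = x * (x0 - x) := by field_simp
  have h3 := mul_nonneg hρ (sq_nonneg (x0 - x))
  nlinarith

/-- scalar inequality, main -/
lemma sp_star {u w : ℝ} (hu : 0 < u) (hw : 0 < w) (ht : u + w ≤ 1) :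
    Real.binEntropy (u + w) - 1 / 4 ≤
      Real.binEntropy w + (u - w) * Real.log (u / w) := by
  set q := 1 - (u + w) with hq
  have hq0 : 0 ≤ q := by linarith
  have htp : 0 < u + w := by linarith
  have e1 : 1 - w = u + q := by rw [hq]; ring
  rw [Real.binEntropy_eq_negMulLog_add_negMulLog_one_sub,
    Real.binEntropy_eq_negMulLog_add_negMulLog_one_sub, ← hq, e1]
  simp only [Real.negMulLog]
  rw [Real.log_div hu.ne' hw.ne']
  have huq : 0 < u + q := by linarith
  -- Gibbs part
  have g1 := sp_log_ge hq0 (k := 4 / 5 * (u + q)) (by positivity)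
  have g2 := sp_log_ge hu.le (k := 1 / 5 * (u + q)) (by positivity)
  rw [Real.log_mul (by norm_num) huq.ne'] at g1 g2
  -- cross-entropy part
  have k1 := Real.log_le_sub_one_of_pos (x := w / (3 / 8 * (u + w))) (by positivity)
  have k2 := Real.log_le_sub_one_of_pos (x := u / (5 / 8 * (u + w))) (by positivity)
  rw [Real.log_div hw.ne' (by positivity), Real.log_mul (by norm_num) htp.ne'] at k1
  rw [Real.log_div hu.ne' (by positivity), Real.log_mul (by norm_num) htp.ne'] at k2
  have k1' := mul_le_mul_of_nonneg_left k1 hu.le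
  have k2' := mul_le_mul_of_nonneg_left k2 hw.le
  have hquad : u * (w / (3 / 8 * (u + w)) - 1) + w * (u / (5 / 8 * (u + w)) - 1)
      ≤ -(2 / 5) * u + (2:ℝ) / 3 * w := by
    have : u * (w / (3 / 8 * (u + w)) - 1) + w * (u / (5 / 8 * (u + w)) - 1)
      = (64 / 15) * (u * w) / (u + w) - (u + w) := by field_simp; ring
    rw [this, sub_le_iff_le_add, div_le_iff₀ htp]
    nlinarith [sq_nonneg (5 * w - 3 * u)]
  have n1 : -(1/4 : ℝ) ≤ Real.log (4 / 5) := by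
    have := Real.one_sub_inv_le_log_of_pos (x := (4 / 5 : ℝ)) (by norm_num)
    norm_num at this ⊢; linarith
  have n2 : Real.log (5 / 8) ≤ -(5/12 : ℝ) := by
    have a1 := Real.log_le_sub_one_of_pos (x := (5 / 6 : ℝ)) (by norm_num)
    have a2 := Real.log_le_sub_one_of_pos (x := (3 / 4 : ℝ)) (by norm_num)
    have : Real.log (5 / 8) = Real.log (5 / 6) + Real.log (3 / 4) := by
      rw [← Real.log_mul (by norm_num) (by norm_num)]; norm_num
    linarith
  have n3 : Real.log (3 / 8) ≤ Real.log (1 / 5) + 13 / 20 := by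
    have a1 := Real.log_le_sub_one_of_pos (x := (15 / 16 : ℝ)) (by norm_num)
    have a2 := Real.log_two_lt_d9
    have : Real.log (3 / 8) = Real.log (1 / 5) + Real.log 2 + Real.log (15 / 16) := by
      rw [← Real.log_mul (by norm_num) (by norm_num), ← Real.log_mul (by norm_num) (by norm_num)]
      norm_num
    linarith
  have n1' := mul_le_mul_of_nonneg_left n1 hq0
  have n2' := mul_le_mul_of_nonneg_left n2 hw.le
  have n3' := mul_le_mul_of_nonneg_left n3 hu.le
  have hsum : u + w + q = 1 := by rw [hq]; ring
  nlinarith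

lemma sp_star0 {u w : ℝ} (_hu : 0 ≤ u) (hw : 0 ≤ w) (ht : u + w ≤ 1) (h0 : w = 0 → u = 0)
    (hwu : w ≤ u) :
    Real.binEntropy (u + w) - 1 / 4 ≤
      Real.binEntropy w + (u - w) * Real.log (u / w) := by
  rcases hw.eq_or_lt with rfl | hw
  · rw [h0 rfl]; simp
  · exact sp_star (hw.trans_le hwu) hw ht

lemma sp_bin_mono {w a : ℝ} (hw : 0 ≤ w) (h1 : w ≤ a) (h2 : w ≤ 1 - a) :
    Real.binEntropy w ≤ Real.binEntropy a := by
  have key : ∀ c, w ≤ c → c ≤ 1/2 → Real.binEntropy w ≤ Real.binEntropy c := fun c h h' =>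
    Real.binEntropy_strictMonoOn.monotoneOn ⟨hw, by norm_num at *; linarith⟩
      ⟨by linarith, by norm_num at *; linarith⟩ h
  rcases le_total a (1/2) with h | h
  · exact key a h1 h
  · rw [← Real.binEntropy_one_sub a]; exact key _ h2 (by linarith)

/-- scalar combination -/
lemma sp_comb {p1 n1 p2 n2 Z1 Z2 L : ℝ} (hp1 : 0 ≤ p1) (hn1 : 0 ≤ n1) (hp2 : 0 ≤ p2)
    (hn2 : 0 ≤ n2) (hs : p1 + n1 + p2 + n2 = 1)
    (h1 : (p1 + n1) * L + (p1 + n1) * Real.log (p1 + n1) ≤ Z1)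
    (h1' : p1 ≤ n1 → (p1 = 0 → n1 = 0) ∧ (p1 + n1) * L + (p1 + n1) * Real.log (p1 + n1)
      + (n1 - p1) * Real.log (n1 / p1) ≤ Z1)
    (h2 : (p2 + n2) * Real.log (p2 + n2) ≤ Z2)
    (h2' : n2 ≤ p2 → (n2 = 0 → p2 = 0) ∧ (p2 + n2) * Real.log (p2 + n2)
      + (p2 - n2) * Real.log (p2 / n2) ≤ Z2) :
    (p1 + n1) * L - 1 / 4 ≤ Z1 + Z2 + Real.binEntropy (p1 + p2) := by
  have hh : Real.binEntropy (p1 + n1) = -((p1 + n1) * Real.log (p1 + n1))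
      - (p2 + n2) * Real.log (p2 + n2) := by
    rw [Real.binEntropy_eq_negMulLog_add_negMulLog_one_sub,
      show 1 - (p1 + n1) = p2 + n2 by linarith]
    simp only [Real.negMulLog]; ring
  have hh' : Real.binEntropy (p2 + n2) = Real.binEntropy (p1 + n1) := by
    rw [← Real.binEntropy_one_sub, show 1 - (p2 + n2) = p1 + n1 by linarith]
  rcases le_total n2 p2 with c | c
  · obtain ⟨h0, hg⟩ := h2' c
    have := sp_star0 hp2 hn2 (by linarith) h0 c
    have := sp_bin_mono (w := n2) (a := p1 + p2) hn2 (by linarith) (by linarith)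
    linarith
  rcases le_total p1 n1 with d | d
  · obtain ⟨h0, hg⟩ := h1' d
    have := sp_star0 hn1 hp1 (by linarith) h0 d
    have := sp_bin_mono (w := p1) (a := p1 + p2) hp1 (by linarith) (by linarith)
    rw [add_comm n1 p1] at *
    linarith
  rcases le_total (p1 + p2) (1/2) with e | e
  · have := sp_star0 (u := (p1 + n1)/2) (w := (p1 + n1)/2) (by linarith) (by linarith)
      (by linarith) id le_rfl
    have := sp_bin_mono (w := (p1 + n1)/2) (a := p1 + p2) (by linarith) (by linarith) (by linarith)
    simp only [add_halves, sub_self, zero_mul] at *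
    linarith
  · have := sp_star0 (u := (p2 + n2)/2) (w := (p2 + n2)/2) (by linarith) (by linarith)
      (by linarith) id le_rfl
    have := sp_bin_mono (w := (p2 + n2)/2) (a := p1 + p2) (by linarith) (by linarith) (by linarith)
    simp only [add_halves, sub_self, zero_mul] at *
    linarith

/-- group lemma, plain -/
lemma sp_group0 {X : Type*} (A : Finset X) (π f : X → ℝ) (hπ : ∀ x, 0 < π x)
    (hs : 0 < ∑ x ∈ A, π x) :
    (∑ x ∈ A, π x * f x ^ 2) * Real.log (∑ x ∈ A, π x * f x ^ 2)
      - (∑ x ∈ A, π x * f x ^ 2) * Real.log (∑ x ∈ A, π x)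
      ≤ ∑ x ∈ A, π x * (f x ^ 2 * Real.log (f x ^ 2)) := by
  set Q := ∑ x ∈ A, π x * f x ^ 2 with hQ
  set s := ∑ x ∈ A, π x with hsd
  have hQ0 : 0 ≤ Q := sum_nonneg fun x _ => mul_nonneg (hπ x).le (sq_nonneg _)
  rcases hQ0.eq_or_lt with h | h
  · rw [← h]
    have h2 := (sum_eq_zero_iff_of_nonneg
      (fun x _ => mul_nonneg (hπ x).le (sq_nonneg (f x)))).1 (hQ.symm.trans h.symm)
    rw [sum_eq_zero (s := A)]
    · simp
    · intro x hx
      have := h2 x hx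
      rw [← mul_assoc, this, zero_mul]
  have : ∑ x ∈ A, (π x * f x ^ 2 * (Real.log (Q / s) + 1) - π x * (Q / s))
      ≤ ∑ x ∈ A, π x * (f x ^ 2 * Real.log (f x ^ 2)) := by
    refine sum_le_sum fun x _ => ?_
    have := mul_le_mul_of_nonneg_left (sp_log_ge (sq_nonneg (f x)) (div_pos h hs)) (hπ x).le
    linarith
  rw [sum_sub_distrib, ← sum_mul, ← sum_mul, ← hQ, ← hsd, Real.log_div h.ne' hs.ne'] at this
  have e : s * (Q / s) = Q := by field_simp
  linarith

/-- group lemma, with sign gain -/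
lemma sp_group1 {X : Type*} (A : Finset X) (π f : X → ℝ) (hπ : ∀ x, 0 < π x)
    (hs : 0 < ∑ x ∈ A, π x) {p n : ℝ}
    (hp : p = ∑ x ∈ A, π x * (max (f x) 0) ^ 2) (hn : n = ∑ x ∈ A, π x * (max (-f x) 0) ^ 2)
    (hm : ∑ x ∈ A, π x * max (f x) 0 ≤ ∑ x ∈ A, π x * max (-f x) 0) (hnp : n ≤ p) (hn0 : 0 < n) :
    (p + n) * Real.log (p + n) - (p + n) * Real.log (∑ x ∈ A, π x)
      + (p - n) * Real.log (p / n)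
      ≤ ∑ x ∈ A, π x * (f x ^ 2 * Real.log (f x ^ 2)) := by
  set s := ∑ x ∈ A, π x with hsd
  have hp0 : 0 < p := hn0.trans_le hnp
  have hQ : 0 < p + n := by linarith
  set x₁ := Real.sqrt (p * (p + n) / (n * s)) with hx1
  set x₂ := Real.sqrt (n * (p + n) / (p * s)) with hx2
  have h1 : 0 < x₁ := Real.sqrt_pos.2 (by positivity)
  have h2 : 0 < x₂ := Real.sqrt_pos.2 (by positivity)
  have q1 : x₁ ^ 2 = p * (p + n) / (n * s) := Real.sq_sqrt (by positivity)
  have q2 : x₂ ^ 2 = n * (p + n) / (p * s) := Real.sq_sqrt (by positivity)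
  have q12 : x₁ * x₂ = (p + n) / s := by
    rw [hx1, hx2, ← Real.sqrt_mul (by positivity)]
    rw [show p * (p + n) / (n * s) * (n * (p + n) / (p * s)) = ((p + n) / s) ^ 2 by field_simp]
    exact Real.sqrt_sq (by positivity)
  have r1 : x₂ / x₁ = n / p := by
    rw [div_eq_div_iff h1.ne' hp0.ne']
    have : x₂ * p * x₁ = n * x₁ * x₁ := by
      rw [mul_right_comm, mul_comm x₂, q12, mul_assoc, ← sq, q1]; field_simp
    exact mul_right_cancel₀ h1.ne' this
  have r2 : x₁ / x₂ = p / n := by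
    rw [← inv_div, r1, inv_div]
  have h12 : x₂ ≤ x₁ := by
    have : x₂ / x₁ ≤ 1 := by rw [r1]; exact (div_le_one hp0).2 hnp
    exact (div_le_one h1).1 this
  have pt : ∀ x ∈ A, π x * (max (f x) 0) ^ 2 * (Real.log (x₁ ^ 2) + 2 - n / p)
      + π x * (max (-f x) 0) ^ 2 * (Real.log (x₂ ^ 2) + 2 - p / n)
      + 2 * (x₁ - x₂) * (π x * max (-f x) 0 - π x * max (f x) 0) - π x * ((p + n) / s)
      ≤ π x * (f x ^ 2 * Real.log (f x ^ 2)) := by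
    intro x _
    rw [← q12]
    rcases lt_trichotomy (f x) 0 with hf | hf | hf
    · rw [max_eq_right hf.le, max_eq_left (by linarith), ← r2]
      have := mul_le_mul_of_nonneg_left
        (sp_pt (x := -f x) (x0 := x₂) (ρ := x₁ / x₂) (by linarith) h2 (by positivity)) (hπ x).le
      rw [neg_sq] at *
      refine le_trans (le_of_eq ?_) this
      field_simp
      ring
    · rw [hf]
      simp
      have := hπ x
      positivity
    · rw [max_eq_left hf.le, max_eq_right (by linarith), ← r1]
      have := mul_le_mul_of_nonneg_left
        (sp_pt (x := f x) (x0 := x₁) (ρ := x₂ / x₁) hf h1 (by positivity)) (hπ x).le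
      refine le_trans (le_of_eq ?_) this
      field_simp
      ring
  have := sum_le_sum pt
  rw [sum_sub_distrib, sum_add_distrib, sum_add_distrib, ← mul_sum, sum_sub_distrib, ← sum_mul,
    ← sum_mul, ← sum_mul, ← hp, ← hn, ← hsd] at this
  have e1 : s * ((p + n) / s) = p + n := by field_simp
  have e2 : p * (n / p) = n := by field_simp
  have e3 : n * (p / n) = p := by field_simp
  have e4 := mul_nonneg (sub_nonneg.2 h12) (sub_nonneg.2 hm)
  rw [q1, q2, Real.log_div (by positivity) (by positivity), Real.log_mul hp0.ne' hQ.ne',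
    Real.log_mul hn0.ne' hs.ne', Real.log_div (by positivity) (by positivity),
    Real.log_mul hn0.ne' hQ.ne', Real.log_mul hp0.ne' hs.ne'] at this
  rw [Real.log_div hp0.ne' hn0.ne']
  linarith

lemma sp_sq_split (y : ℝ) : y ^ 2 = (max y 0) ^ 2 + (max (-y) 0) ^ 2 := by
  rcases le_total y 0 with h | h
  · rw [max_eq_right h, max_eq_left (by linarith)]; ring
  · rw [max_eq_left h, max_eq_right (by linarith)]; ring

lemma sp_group2 {X : Type*} (A : Finset X) (π f : X → ℝ) (hπ : ∀ x, 0 < π x)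
    (hs : 0 < ∑ x ∈ A, π x) {p n : ℝ}
    (hp : p = ∑ x ∈ A, π x * (max (f x) 0) ^ 2) (hn : n = ∑ x ∈ A, π x * (max (-f x) 0) ^ 2)
    (hm : ∑ x ∈ A, π x * max (f x) 0 ≤ ∑ x ∈ A, π x * max (-f x) 0) (hnp : n ≤ p) :
    (n = 0 → p = 0) ∧
    (p + n) * Real.log (p + n) - (p + n) * Real.log (∑ x ∈ A, π x)
      + (p - n) * Real.log (p / n)
      ≤ ∑ x ∈ A, π x * (f x ^ 2 * Real.log (f x ^ 2)) := by
  have hn0 : 0 ≤ n := hn ▸ sum_nonneg fun x _ => mul_nonneg (hπ x).le (sq_nonneg _)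
  have h0 : n = 0 → p = 0 := by
    intro h
    have h2 := (sum_eq_zero_iff_of_nonneg
      (fun x _ => mul_nonneg (hπ x).le (sq_nonneg (max (-f x) 0)))).1 (hn.symm.trans h)
    have h3 : ∑ x ∈ A, π x * max (-f x) 0 = 0 := by
      refine sum_eq_zero fun x hx => ?_
      have := h2 x hx
      have h4 : max (-f x) 0 = 0 := by simpa [(hπ x).ne'] using this
      rw [h4, mul_zero]
    have h5 : ∑ x ∈ A, π x * max (f x) 0 = 0 :=
      le_antisymm (hm.trans h3.le) (sum_nonneg fun x _ => mul_nonneg (hπ x).le (le_max_right _ _))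
    have h6 := (sum_eq_zero_iff_of_nonneg
      (fun x _ => mul_nonneg (hπ x).le (le_max_right (f x) 0))).1 h5
    rw [hp]
    refine sum_eq_zero fun x hx => ?_
    have := h6 x hx
    rw [sq, ← mul_assoc, this, zero_mul]
  refine ⟨h0, ?_⟩
  rcases hn0.eq_or_lt with h | h
  · have h' := h0 h.symm
    have := sp_group0 A π f hπ hs
    have e : ∑ x ∈ A, π x * f x ^ 2 = p + n := by
      rw [hp, hn, ← sum_add_distrib]
      refine sum_congr rfl fun x _ => ?_
      rw [sp_sq_split (f x)]; ring
    rw [e] at this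
    rw [← h, h'] at *
    simpa using this
  · exact sp_group1 A π f hπ hs hp hn hm hnp h

lemma sp_total_aux {X : Type*} [Fintype X] [DecidableEq X] (S : Finset X) (π f : X → ℝ)
    (hπ : ∀ x, 0 < π x) (hsum : ∑ x, π x = 1) (hs : 0 < ∑ x ∈ S, π x)
    (hs1 : ∑ x ∈ S, π x < 1) (hE : ∑ x, π x * f x = 0) (hE2 : ∑ x, π x * f x ^ 2 = 1)
    {L : ℝ} (hL : L ≤ -Real.log (∑ x ∈ S, π x))
    (hr : ∑ x ∈ S, π x * max (-f x) 0 ≤ ∑ x ∈ S, π x * max (f x) 0) :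
    (∑ x ∈ S, π x * f x ^ 2) * L - 1 / 4 ≤ (∑ x, π x * (f x ^ 2 * Real.log (f x ^ 2)))
      + Real.binEntropy (∑ x, π x * (max (f x) 0) ^ 2) := by
  have split : ∀ g : X → ℝ, ∑ x, g x = ∑ x ∈ S, g x + ∑ x ∈ Sᶜ, g x := fun g =>
    (sum_add_sum_compl S g).symm
  have sq : ∀ A : Finset X, ∑ x ∈ A, π x * f x ^ 2 =
      ∑ x ∈ A, π x * (max (f x) 0) ^ 2 + ∑ x ∈ A, π x * (max (-f x) 0) ^ 2 := by
    intro A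
    rw [← sum_add_distrib]
    refine sum_congr rfl fun x _ => ?_
    rw [sp_sq_split (f x)]; ring
  have nn : ∀ (A : Finset X) (g : X → ℝ), 0 ≤ ∑ x ∈ A, π x * g x ^ 2 := fun A g =>
    sum_nonneg fun x _ => mul_nonneg (hπ x).le (sq_nonneg _)
  have hpm : ∑ x, π x * max (f x) 0 = ∑ x, π x * max (-f x) 0 := by
    rw [← sub_eq_zero, ← sum_sub_distrib]
    refine Eq.trans ?_ hE
    refine sum_congr rfl fun x _ => ?_
    rw [← mul_sub]
    congr 1
    rcases le_total (f x) 0 with h | h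
    · rw [max_eq_right h, max_eq_left (by linarith)]; ring
    · rw [max_eq_left h, max_eq_right (by linarith)]; ring
  have hsc : ∑ x ∈ Sᶜ, π x = 1 - ∑ x ∈ S, π x := by rw [← hsum, split π]; ring
  have hsc0 : 0 < ∑ x ∈ Sᶜ, π x := by rw [hsc]; linarith
  have hlogc : Real.log (∑ x ∈ Sᶜ, π x) ≤ 0 :=
    Real.log_nonpos hsc0.le (by rw [hsc]; linarith)
  rw [split (fun x => π x * (f x ^ 2 * Real.log (f x ^ 2))),
    split (fun x => π x * (max (f x) 0) ^ 2), sq S]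
  have hQ := nn S f
  have hQc := nn Sᶜ f
  have m1 := mul_le_mul_of_nonneg_left hL hQ
  have m2 := mul_nonneg hQc (neg_nonneg.2 hlogc)
  have g1 := sp_group0 S π f hπ hs
  have g2 := sp_group0 Sᶜ π f hπ hsc0
  rw [sq] at m1 m2 g1 g2
  apply sp_comb (nn S _) (nn S _) (nn Sᶜ _) (nn Sᶜ _)
  · rw [← sq, add_assoc, ← sq, ← split, hE2]
  · linarith
  · intro h
    have := sp_group2 S π (fun x => -f x) hπ hs (p := ∑ x ∈ S, π x * (max (-f x) 0) ^ 2)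
      (n := ∑ x ∈ S, π x * (max (f x) 0) ^ 2) rfl (by simp) (by simpa using hr) h
    refine ⟨this.1, ?_⟩
    have h2 := this.2
    simp only [neg_sq] at h2
    rw [add_comm (∑ x ∈ S, π x * (max (-f x) 0) ^ 2)] at h2
    linarith
  · linarith
  · intro h
    have := sp_group2 Sᶜ π f hπ hsc0 rfl rfl
      (by rw [split, split (fun x => π x * max (-f x) 0)] at hpm; linarith) h
    refine ⟨this.1, ?_⟩
    have h2 := this.2
    linarith

lemma sp_total {X : Type*} [Fintype X] [DecidableEq X] (S : Finset X) (π f : X → ℝ)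
    (hπ : ∀ x, 0 < π x) (hsum : ∑ x, π x = 1) (hs : 0 < ∑ x ∈ S, π x)
    (hs1 : ∑ x ∈ S, π x < 1) (hE : ∑ x, π x * f x = 0) (hE2 : ∑ x, π x * f x ^ 2 = 1)
    {L : ℝ} (hL : L ≤ -Real.log (∑ x ∈ S, π x)) :
    (∑ x ∈ S, π x * f x ^ 2) * L - 1 / 4 ≤ (∑ x, π x * (f x ^ 2 * Real.log (f x ^ 2)))
      + Real.binEntropy (∑ x, π x * (max (f x) 0) ^ 2) := by
  rcases le_total (∑ x ∈ S, π x * max (-f x) 0) (∑ x ∈ S, π x * max (f x) 0) with h | h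
  · exact sp_total_aux S π f hπ hsum hs hs1 hE hE2 hL h
  · have := sp_total_aux S π (fun x => -f x) hπ hsum hs hs1 (by simp [hE]) (by simpa using hE2) hL
      (by simpa using h)
    simp only [neg_sq] at this
    have e : ∑ x, π x * (max (-f x) 0) ^ 2 = 1 - ∑ x, π x * (max (f x) 0) ^ 2 := by
      rw [← hE2, ← sum_sub_distrib]
      refine sum_congr rfl fun x _ => ?_
      rw [sp_sq_split (f x)]; ring
    rw [e, Real.binEntropy_one_sub] at this
    exact this

/-- entropy of positive and negative parts -/
lemma sp_ent_split {X : Type*} [Fintype X] (π f : X → ℝ) (hE2 : ∑ x, π x * f x ^ 2 = 1) :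
    entPi π (fun x => (max (f x) 0) ^ 2) + entPi π (fun x => (max (-f x) 0) ^ 2)
      = (∑ x, π x * (f x ^ 2 * Real.log (f x ^ 2)))
      + Real.binEntropy (∑ x, π x * (max (f x) 0) ^ 2) := by
  have e : ∑ x, π x * (max (-f x) 0) ^ 2 = 1 - ∑ x, π x * (max (f x) 0) ^ 2 := by
    rw [← hE2, ← sum_sub_distrib]
    refine sum_congr rfl fun x _ => ?_
    rw [sp_sq_split (f x)]; ring
  have e2 : ∑ x, π x * (f x ^ 2 * Real.log (f x ^ 2)) =
      ∑ x, π x * ((max (f x) 0) ^ 2 * Real.log ((max (f x) 0) ^ 2)) +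
      ∑ x, π x * ((max (-f x) 0) ^ 2 * Real.log ((max (-f x) 0) ^ 2)) := by
    rw [← sum_add_distrib]
    refine sum_congr rfl fun x _ => ?_
    rcases le_total (f x) 0 with h | h
    · rw [max_eq_right h, max_eq_left (by linarith)]; simp
    · rw [max_eq_left h, max_eq_right (by linarith)]; simp
  unfold entPi
  rw [e, e2, Real.binEntropy_eq_negMulLog_add_negMulLog_one_sub]
  simp only [Real.negMulLog]
  ring

lemma sp_dir_split {X : Type*} [Fintype X] (P : Matrix X X ℝ) (π f : X → ℝ)
    (hP : ∀ x y, 0 ≤ P x y) (hπ : ∀ x, 0 < π x) :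
    dirichletForm P π (fun x => max (f x) 0) + dirichletForm P π (fun x => max (-f x) 0)
      ≤ dirichletForm P π f := by
  unfold dirichletForm
  rw [← sum_add_distrib]
  refine sum_le_sum fun x _ => ?_
  rw [← mul_add]
  refine mul_le_mul_of_nonneg_left ?_ (hπ x).le
  have e : P.mulVec f x = P.mulVec (fun x => max (f x) 0) x - P.mulVec (fun x => max (-f x) 0) x := by
    simp only [Matrix.mulVec, dotProduct]
    rw [← sum_sub_distrib]
    refine sum_congr rfl fun y _ => ?_
    rw [← mul_sub]
    congr 1
    rcases le_total (f y) 0 with h | h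
    · rw [max_eq_right h, max_eq_left (by linarith)]; ring
    · rw [max_eq_left h, max_eq_right (by linarith)]; ring
  have a1 : 0 ≤ P.mulVec (fun x => max (f x) 0) x :=
    sum_nonneg fun y _ => mul_nonneg (hP x y) (le_max_right _ _)
  have a2 : 0 ≤ P.mulVec (fun x => max (-f x) 0) x :=
    sum_nonneg fun y _ => mul_nonneg (hP x y) (le_max_right _ _)
  rw [e]
  beta_reduce
  rcases le_total (f x) 0 with h | h
  · rw [max_eq_right h, max_eq_left (by linarith)]; nlinarith
  · rw [max_eq_left h, max_eq_right (by linarith)]; nlinarith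

lemma sp_cubic {x : ℝ} (hx : |x| ≤ 1 / 2) :
    2 * x + 3 * x ^ 2 - 10 * |x| ^ 3 ≤ (1 + x) ^ 2 * Real.log ((1 + x) ^ 2) := by
  have h := Real.abs_log_sub_add_sum_range_le (x := -x) (by rw [abs_neg]; linarith) 2
  rw [abs_neg] at h
  simp [sum_range_succ] at h
  have hd : |x| ^ 3 / (1 - |x|) ≤ 2 * |x| ^ 3 := by
    rw [div_le_iff₀ (by linarith)]
    nlinarith [pow_nonneg (abs_nonneg x) 3]
  have h1 := (abs_le.1 (h.trans hd)).1
  rw [Real.log_pow]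
  push_cast
  have h2 : x - x ^ 2 / 2 - 2 * |x| ^ 3 ≤ Real.log (1 + x) := by norm_num at h1; linarith
  have h3 := mul_le_mul_of_nonneg_left h2 (sq_nonneg (1 + x))
  have hxx := abs_le.1 hx
  have h4 : (1 + x) ^ 2 ≤ 9 / 4 := by nlinarith
  have h5 := mul_le_mul_of_nonneg_right h4 (pow_nonneg (abs_nonneg x) 3)
  have h6 : x ^ 4 ≤ |x| ^ 3 / 2 := by
    have : x ^ 4 = |x| ^ 3 * |x| := by rw [← pow_succ, Even.pow_abs (by decide)]
    rw [this]; nlinarith [pow_nonneg (abs_nonneg x) 3]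
  nlinarith

lemma sp_dir_shift {X : Type*} [Fintype X] (P : Matrix X X ℝ) (π f : X → ℝ)
    (hM : IsMarkov P π) (ε : ℝ) :
    dirichletForm P π (fun x => 1 + ε * f x) = ε ^ 2 * dirichletForm P π f := by
  have hmv : ∀ x, P.mulVec (fun x => 1 + ε * f x) x = 1 + ε * P.mulVec f x := by
    intro x
    simp only [Matrix.mulVec, dotProduct]
    refine Eq.trans (b := ∑ y, P x y + ε * ∑ y, P x y * f y) ?_ (by rw [hM.rowSum x])
    rw [mul_sum, ← sum_add_distrib]
    exact sum_congr rfl fun y _ => by ring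
  have hst : ∑ x, π x * P.mulVec f x = ∑ x, π x * f x := by
    simp only [Matrix.mulVec, dotProduct, mul_sum]
    rw [sum_comm]
    refine sum_congr rfl fun y _ => ?_
    rw [← hM.stationary y, sum_mul]
    refine sum_congr rfl fun x _ => by ring
  unfold dirichletForm
  have : ∀ x, π x * ((1 + ε * f x) * (1 + ε * f x - P.mulVec (fun x => 1 + ε * f x) x))
      = ε * (π x * f x - π x * P.mulVec f x) + ε ^ 2 * (π x * (f x * (f x - P.mulVec f x))) := by
    intro x; rw [hmv]; ring
  simp only [this]
  rw [sum_add_distrib, ← mul_sum, ← mul_sum, sum_sub_distrib, hst]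
  ring

lemma sp_poincare {X : Type*} [Fintype X] (P : Matrix X X ℝ) (π f : X → ℝ)
    (hM : IsMarkov P π) {ω : ℝ} (hω : 0 < ω) (hLS : LogSobolev P π ω)
    (hE : ∑ x, π x * f x = 0) (hE2 : ∑ x, π x * f x ^ 2 = 1) :
    2 * ω ≤ dirichletForm P π f := by
  obtain ⟨K, hK0, hK⟩ : ∃ K : ℝ, 0 < K ∧ ∀ x, |f x| ≤ K := by
    refine ⟨∑ x, |f x| + 1, by positivity, fun x => ?_⟩
    have := single_le_sum (f := fun x => |f x|) (fun i _ => abs_nonneg _) (mem_univ x)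
    linarith
  have key : ∀ ε : ℝ, 0 < ε → ε * K ≤ 1 / 2 → ω * (2 - ε ^ 2 - 10 * K * ε) ≤ dirichletForm P π f := by
    intro ε hε hεK
    have h := hLS (fun x => 1 + ε * f x)
    rw [sp_dir_shift P π f hM] at h
    have hN : ∑ x, π x * (1 + ε * f x) ^ 2 = 1 + ε ^ 2 := by
      have : ∀ x, π x * (1 + ε * f x) ^ 2 = π x + 2 * ε * (π x * f x) + ε ^ 2 * (π x * f x ^ 2) := by
        intro x; ring
      simp only [this]
      rw [sum_add_distrib, sum_add_distrib, ← mul_sum, ← mul_sum, hE, hE2, hM.pi_sum]; ring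
    have hlow : 3 * ε ^ 2 - 10 * K * ε ^ 3
        ≤ ∑ x, π x * ((1 + ε * f x) ^ 2 * Real.log ((1 + ε * f x) ^ 2)) := by
      have : ∑ x, (2 * ε * (π x * f x) + (3 * ε ^ 2 - 10 * K * ε ^ 3) * (π x * f x ^ 2))
          ≤ ∑ x, π x * ((1 + ε * f x) ^ 2 * Real.log ((1 + ε * f x) ^ 2)) := by
        refine sum_le_sum fun x _ => ?_
        have ha : |ε * f x| = ε * |f x| := by rw [abs_mul, abs_of_pos hε]
        have hc := sp_cubic (x := ε * f x) (by
          rw [ha]; exact (mul_le_mul_of_nonneg_left (hK x) hε.le).trans hεK)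
        rw [ha] at hc
        have h3 : (ε * |f x|) ^ 3 ≤ K * ε ^ 3 * f x ^ 2 := by
          have : (ε * |f x|) ^ 3 = |f x| * (ε ^ 3 * f x ^ 2) := by
            rw [← sq_abs (f x)]; ring
          rw [this]
          have := mul_le_mul_of_nonneg_right (hK x) (show 0 ≤ ε ^ 3 * f x ^ 2 by positivity)
          linarith
        have hc2 : 2 * (ε * f x) + 3 * (ε * f x) ^ 2 - 10 * (K * ε ^ 3 * f x ^ 2)
          ≤ (1 + ε * f x) ^ 2 * Real.log ((1 + ε * f x) ^ 2) := by linarith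
        have := mul_le_mul_of_nonneg_left hc2 (hM.pi_pos x).le
        linarith
      rw [sum_add_distrib, ← mul_sum, ← mul_sum, hE, hE2] at this
      linarith
    have hlog : Real.log (1 + ε ^ 2) ≤ ε ^ 2 := by
      have := Real.log_le_sub_one_of_pos (x := 1 + ε ^ 2) (by positivity)
      linarith
    have hlog2 := mul_le_mul_of_nonneg_left hlog (show 0 ≤ 1 + ε ^ 2 by positivity)
    have hent : ε ^ 2 * (2 - ε ^ 2 - 10 * K * ε) ≤ entPi π (fun x => (1 + ε * f x) ^ 2) := by
      unfold entPi
      simp only [hN]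
      linarith
    have h4 := (mul_le_mul_of_nonneg_left hent hω.le).trans h
    have hε2 : 0 < ε ^ 2 := by positivity
    refine le_of_mul_le_mul_left ?_ hε2
    linarith
  have ht : Filter.Tendsto (fun ε : ℝ => ω * (2 - ε ^ 2 - 10 * K * ε)) (nhdsWithin 0 (Set.Ioi 0))
      (nhds (2 * ω)) := by
    have : Continuous (fun ε : ℝ => ω * (2 - ε ^ 2 - 10 * K * ε)) := by fun_prop
    have h := (this.tendsto 0).mono_left (nhdsWithin_le_nhds (s := Set.Ioi 0))
    convert h using 2
    ring
  refine le_of_tendsto ht ?_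
  have : Set.Ioo (0:ℝ) (1 / (2 * K)) ∈ nhdsWithin (0:ℝ) (Set.Ioi 0) :=
    Ioo_mem_nhdsGT (by positivity)
  filter_upwards [this] with ε hε
  refine key ε hε.1 ?_
  have := hε.2.le
  rw [le_div_iff₀ (by positivity)] at this
  linarith

/-- core functional inequality, normalized -/
lemma sp_core1 {X : Type*} [Fintype X] [DecidableEq X] (P : Matrix X X ℝ) (π f : X → ℝ)
    (hM : IsMarkov P π) {ω : ℝ} (hω : 0 < ω) (hLS : LogSobolev P π ω)
    (S : Finset X) (hs : 0 < ∑ x ∈ S, π x) (hs1 : ∑ x ∈ S, π x < 1)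
    {L b : ℝ} (hL : L ≤ -Real.log (∑ x ∈ S, π x)) (hb : b ≤ 2 / 3 * ω * L)
    (hE : ∑ x, π x * f x = 0) (hE2 : ∑ x, π x * f x ^ 2 = 1) :
    ω / 2 + b * ∑ x ∈ S, π x * f x ^ 2 ≤ dirichletForm P π f := by
  have h1 := sp_poincare P π f hM hω hLS hE hE2
  have h2 := sp_total S π f hM.pi_pos hM.pi_sum hs hs1 hE hE2 hL
  rw [← sp_ent_split π f hE2] at h2
  have h3 := sp_dir_split P π f hM.nonneg hM.pi_pos
  have h4 := hLS (fun x => max (f x) 0)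
  have h5 := hLS (fun x => max (-f x) 0)
  have h6 := mul_le_mul_of_nonneg_left h2 hω.le
  have h7 := mul_le_mul_of_nonneg_right hb
    (show 0 ≤ ∑ x ∈ S, π x * f x ^ 2 from
      sum_nonneg fun x _ => mul_nonneg (hM.pi_pos x).le (sq_nonneg _))
  linarith

lemma sp_core {X : Type*} [Fintype X] [DecidableEq X] (P : Matrix X X ℝ) (π f : X → ℝ)
    (hM : IsMarkov P π) {ω : ℝ} (hω : 0 < ω) (hLS : LogSobolev P π ω)
    (S : Finset X) (hs : 0 < ∑ x ∈ S, π x) (hs1 : ∑ x ∈ S, π x < 1)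
    {L b : ℝ} (hL : L ≤ -Real.log (∑ x ∈ S, π x)) (hb : b ≤ 2 / 3 * ω * L)
    (hE : ∑ x, π x * f x = 0) :
    ω / 2 * ∑ x, π x * f x ^ 2 + b * ∑ x ∈ S, π x * f x ^ 2 ≤ dirichletForm P π f := by
  have hN0 : 0 ≤ ∑ x, π x * f x ^ 2 :=
      sum_nonneg fun x _ => mul_nonneg (hM.pi_pos x).le (sq_nonneg _)
  rcases hN0.eq_or_lt with h | h
  · have h2 := (sum_eq_zero_iff_of_nonneg
      (fun x _ => mul_nonneg (hM.pi_pos x).le (sq_nonneg (f x)))).1 h.symm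
    have h3 : f = fun _ => 0 := by
      funext x
      have := h2 x (mem_univ x)
      simpa [(hM.pi_pos x).ne'] using this
    rw [h3]
    simp [dirichletForm]
  set N := ∑ x, π x * f x ^ 2 with hN
  set c := (Real.sqrt N)⁻¹ with hc
  have hc2 : c ^ 2 * N = 1 := by
    rw [hc, inv_pow, Real.sq_sqrt h.le]; field_simp
  have hsq : ∀ A : Finset X, ∑ x ∈ A, π x * (c * f x) ^ 2 = c ^ 2 * ∑ x ∈ A, π x * f x ^ 2 := by
    intro A
    rw [mul_sum]
    exact sum_congr rfl fun x _ => by ring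
  have hD : dirichletForm P π (fun x => c * f x) = c ^ 2 * dirichletForm P π f := by
    have hmv : ∀ x, P.mulVec (fun x => c * f x) x = c * P.mulVec f x := by
      intro x
      simp only [Matrix.mulVec, dotProduct, mul_sum]
      exact sum_congr rfl fun x _ => by ring
    unfold dirichletForm
    rw [mul_sum]
    exact sum_congr rfl fun x _ => by rw [hmv]; ring
  have := sp_core1 P π (fun x => c * f x) hM hω hLS S hs hs1 hL hb
    (by
      have : ∀ x, π x * (c * f x) = c * (π x * f x) := fun x => by ring
      simp only [this]
      rw [← mul_sum, hE, mul_zero])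
    (by rw [hsq, ← hN, hc2])
  rw [hsq, hD] at this
  have hcp : 0 < c ^ 2 := by
    rw [hc]; have := Real.sqrt_pos.2 h; positivity
  refine le_of_mul_le_mul_left ?_ hcp
  nlinarith

/-- under a log-Sobolev inequality with constant `ω` and the `γ` spectral
density condition, the `ω/2` short-path condition holds for every
`0 < b < (2/3)·γ·ω·ln(1/π(E*))`. -/
theorem stmt_3 {X : Type*} [Fintype X] [DecidableEq X]
    (P : Matrix X X ℝ) (π : X → ℝ) (hM : IsMarkov P π) (hrev : IsReversible P π)
    (ω : ℝ) (hω : ω ∈ Set.Ioo (0:ℝ) 1) (hLS : LogSobolev P π ω)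
    (H : X → ℝ) (Estar : ℝ) (hmin : IsLeast (Set.range H) Estar) (hEstar : Estar < 0)
    (hpiStar : piStar π H Estar < 1)
    (η γ : ℝ) (hη : η ∈ Set.Ioo (0:ℝ) 1) (hγ : γ ∈ Set.Ioc (0:ℝ) 1)
    (hSD : massLE π H ((1 - η) * Estar) ≤ piStar π H Estar ^ γ) :
    ∀ b : ℝ, 0 < b → b < 2 / 3 * γ * ω * Real.log (1 / piStar π H Estar) →
      ShortPathCond P π b η H Estar (ω / 2) := by
  intro b hb0 hb v
  obtain ⟨⟨x₀, hx₀⟩, hlb⟩ := hmin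
  have hHge : ∀ x, Estar ≤ H x := fun x => hlb ⟨x, rfl⟩
  set S : Finset X := univ.filter (fun x => H x ≤ (1 - η) * Estar) with hS
  have hsS : massLE π H ((1 - η) * Estar) = ∑ x ∈ S, π x := by
    rw [massLE, hS, sum_filter]
    exact sum_congr rfl fun x _ => by simp [Set.indicator_apply]
  have hx₀S : x₀ ∈ S := by
    rw [hS, mem_filter]
    refine ⟨mem_univ _, ?_⟩
    rw [hx₀]; nlinarith [hη.1]
  have hs : 0 < ∑ x ∈ S, π x := sum_pos (fun x _ => hM.pi_pos x) ⟨x₀, hx₀S⟩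
  have hp0 : 0 < piStar π H Estar := by
    refine sum_pos' (fun x _ => Set.indicator_nonneg (fun y _ => (hM.pi_pos y).le) x)
      ⟨x₀, mem_univ _, ?_⟩
    rw [Set.indicator_of_mem (by exact hx₀)]
    exact hM.pi_pos x₀
  rw [hsS] at hSD
  have hs1 : ∑ x ∈ S, π x < 1 := hSD.trans_lt (Real.rpow_lt_one hp0.le hpiStar hγ.1)
  have hL : γ * Real.log (1 / piStar π H Estar) ≤ -Real.log (∑ x ∈ S, π x) := by
    have := Real.log_le_log hs hSD
    rw [Real.log_rpow hp0] at this
    rw [one_div, Real.log_inv]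
    linarith
  have hb' : b ≤ 2 / 3 * ω * (γ * Real.log (1 / piStar π H Estar)) := by linarith
  -- the projected vector
  have hsq : ∀ x, Real.sqrt (π x) * Real.sqrt (π x) = π x := fun x =>
    Real.mul_self_sqrt (hM.pi_pos x).le
  have hsp : ∀ x, 0 < Real.sqrt (π x) := fun x => Real.sqrt_pos.2 (hM.pi_pos x)
  set w : X → ℝ := (projPerp π).mulVec v with hw
  set c : ℝ := ∑ x, Real.sqrt (π x) * v x with hc
  have hwx : ∀ x, w x = v x - Real.sqrt (π x) * c := by
    intro x
    rw [hw, projPerp, Matrix.sub_mulVec, Matrix.one_mulVec, Pi.sub_apply]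
    congr 1
    simp only [Matrix.mulVec, dotProduct, Matrix.vecMulVec_apply, sqrtVec]
    rw [hc, mul_sum]
    exact sum_congr rfl fun y _ => by ring
  have hwE : ∑ x, Real.sqrt (π x) * w x = 0 := by
    have : ∀ x, Real.sqrt (π x) * w x = Real.sqrt (π x) * v x - π x * c := by
      intro x; rw [hwx]; linear_combination -c * hsq x
    simp only [this]
    rw [sum_sub_distrib, ← sum_mul, hM.pi_sum, ← hc]; ring
  have hww : ∑ x, w x * w x ≤ ∑ x, v x * v x := by
    have : ∑ x, v x * v x = ∑ x, w x * w x + c ^ 2 := by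
      have : ∀ x, v x * v x = w x * w x + 2 * c * (Real.sqrt (π x) * w x) + c ^ 2 * π x := by
        intro x
        have : v x = w x + Real.sqrt (π x) * c := by rw [hwx]; ring
        rw [this]; linear_combination c ^ 2 * hsq x
      simp only [this]
      rw [sum_add_distrib, sum_add_distrib, ← mul_sum, ← mul_sum, hM.pi_sum, hwE]; ring
    nlinarith [sq_nonneg c]
  have hsymm : (projPerp π)ᵀ = projPerp π := by
    rw [projPerp, Matrix.transpose_sub, Matrix.transpose_one, Matrix.transpose_vecMulVec]
  have hform : ∑ x, v x * (projPerp π * shortPathHam P π b η H Estar * projPerp π).mulVec v x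
      = ∑ x, w x * (shortPathHam P π b η H Estar).mulVec w x := by
    change v ⬝ᵥ _ = w ⬝ᵥ _
    rw [← Matrix.mulVec_mulVec, ← Matrix.mulVec_mulVec, ← hw, Matrix.dotProduct_mulVec,
      ← Matrix.mulVec_transpose, hsymm]
  rw [hform]
  set f : X → ℝ := fun x => w x / Real.sqrt (π x) with hf
  have hwf : ∀ x, w x = Real.sqrt (π x) * f x := by
    intro x; rw [hf]; have := (hsp x).ne'; field_simp
  have hfE : ∑ x, π x * f x = 0 := by
    rw [← hwE]
    exact sum_congr rfl fun x _ => by rw [hwf x, ← mul_assoc, hsq]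
  have hf2 : ∀ x, w x * w x = π x * f x ^ 2 := by
    intro x; rw [hwf x]; linear_combination f x ^ 2 * hsq x
  have hcore := sp_core P π f hM hω.1 hLS S hs hs1 hL hb' hfE
  have hexp : ∑ x, w x * (shortPathHam P π b η H Estar).mulVec w x
      = -(∑ x, w x * w x) + dirichletForm P π f
        + b * ∑ x, π x * f x ^ 2 * gEta η (H x / |Estar|) := by
    rw [dirichletForm, mul_sum, ← sum_neg_distrib, ← sum_add_distrib, ← sum_add_distrib]
    refine sum_congr rfl fun x _ => ?_
    have e1 : (discMat P π).mulVec w x = Real.sqrt (π x) * P.mulVec f x := by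
      simp only [Matrix.mulVec, dotProduct, discMat, Matrix.of_apply, mul_sum]
      refine sum_congr rfl fun y _ => ?_
      rw [hwf y, Real.sqrt_div (hM.pi_pos x).le]
      have := (hsp y).ne'
      field_simp
    have e2 : (b • GEtaMat η H Estar).mulVec w x = b * (gEta η (H x / |Estar|) * w x) := by
      rw [Matrix.smul_mulVec, Pi.smul_apply, GEtaMat, Matrix.mulVec_diagonal, smul_eq_mul]
    rw [shortPathHam, Matrix.add_mulVec, Matrix.neg_mulVec, Pi.add_apply, Pi.neg_apply, e1, e2]
    have h1 := hf2 x
    have h2 : w x * Real.sqrt (π x) = π x * f x := by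
      rw [hwf x, mul_right_comm, hsq]
    linear_combination (b * gEta η (H x / |Estar|) + 1) * h1 - P.mulVec f x * h2
  have hg : -(∑ x ∈ S, π x * f x ^ 2) ≤ ∑ x, π x * f x ^ 2 * gEta η (H x / |Estar|) := by
    rw [hS, sum_filter, ← sum_neg_distrib]
    refine sum_le_sum fun x _ => ?_
    have hnn : 0 ≤ π x * f x ^ 2 := mul_nonneg (hM.pi_pos x).le (sq_nonneg _)
    have hE' : 0 < -Estar := by linarith
    rw [abs_of_neg hEstar]
    split_ifs with h
    · have : -1 ≤ gEta η (H x / -Estar) := by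
        refine le_min (by norm_num) ?_
        rw [le_div_iff₀ hη.1]
        have : -1 ≤ H x / -Estar := by
          rw [le_div_iff₀ hE']; linarith [hHge x]
        linarith
      nlinarith
    · have : gEta η (H x / -Estar) = 0 := by
        refine min_eq_left ?_
        refine div_nonneg ?_ hη.1.le
        have : -(1 - η) ≤ H x / -Estar := by
          rw [le_div_iff₀ hE']; push Not at h; linarith
        linarith
      rw [this]; simp
  have hg' := mul_le_mul_of_nonneg_left hg hb0.le
  have hN : ∑ x, w x * w x = ∑ x, π x * f x ^ 2 := sum_congr rfl fun x _ => hf2 x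
  rw [hexp]
  have h1 : (-1 + ω / 2) * (∑ x, v x * v x) ≤ (-1 + ω / 2) * (∑ x, w x * w x) :=
    mul_le_mul_of_nonpos_left hww (by linarith [hω.2])
  rw [← hN] at hcore
  linarith
end
end

section
/- Let M = (X, P, π) be a reversible finite Markov chain, H : X → ℝ with minimum E* < 0 and π(E*) < 1, η ∈ (0,1), γ ∈ (0,1], ω ∈ (0,1) and 0 ≤ b ≤ 1. Suppose the γ spectral density condition holds (π({x : H(x) ≤ (1−η)E*}) ≤ π(E*)^γ) and the ω/2 short-path condition holds at b (smallest eigenvalue of Π_⊥ H_b Π_⊥ at least −1 + ω/2). Then the smallest eigenvalue E_b of the short-path Hamiltonian H_b = −D(P) + b·G_η satisfies −1 − 4·π(E*)^γ/ω < E_b ≤ −1; in particular |E_b| < 1 + 4·π(E*)^γ/ω. -/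
open Matrix Finset

noncomputable section

variable {X : Type*} [Fintype X] [DecidableEq X]

theorem aux_disc (P : Matrix X X ℝ) (π : X → ℝ) (hM : IsMarkov P π) :
    discMat P π *ᵥ sqrtVec π = sqrtVec π := by
  funext x
  simp only [Matrix.mulVec, dotProduct, discMat, sqrtVec, Matrix.of_apply]
  calc _ = ∑ y, Real.sqrt (π x) * P x y := by
        refine Finset.sum_congr rfl fun y _ => ?_
        rw [Real.sqrt_div (hM.pi_pos x).le]
        have := (Real.sqrt_pos.2 (hM.pi_pos y)).ne'
        field_simp
    _ = _ := by rw [← Finset.mul_sum, hM.rowSum, mul_one]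

theorem aux_ham (P : Matrix X X ℝ) (π : X → ℝ) (hM : IsMarkov P π) (b η : ℝ) (H : X → ℝ)
    (E : ℝ) : shortPathHam P π b η H E *ᵥ sqrtVec π =
      -sqrtVec π + fun x => b * gEta η (H x / |E|) * sqrtVec π x := by
  rw [shortPathHam, Matrix.add_mulVec, Matrix.neg_mulVec, aux_disc P π hM]
  congr 1
  funext x
  rw [Matrix.smul_mulVec, GEtaMat, Pi.smul_apply, Matrix.mulVec_diagonal, smul_eq_mul, mul_assoc]

theorem aux_ss (P : Matrix X X ℝ) (π : X → ℝ) (hM : IsMarkov P π) :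
    sqrtVec π ⬝ᵥ sqrtVec π = 1 := by
  rw [← hM.pi_sum]
  exact Finset.sum_congr rfl fun x _ => Real.mul_self_sqrt (hM.pi_pos x).le

theorem aux_g {η E h : ℝ} (hη : η ∈ Set.Ioo (0:ℝ) 1) (hE : E < 0) (hh : E ≤ h) :
    -1 ≤ gEta η (h / |E|) ∧ gEta η (h / |E|) ≤ 0 ∧
      (¬ h ≤ (1 - η) * E → gEta η (h / |E|) = 0) := by
  have h0 := hη.1
  have hE' : 0 < -E := by linarith
  rw [abs_of_neg hE]
  refine ⟨?_, min_le_left _ _, fun hn => ?_⟩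
  · refine le_min (by norm_num) ?_
    rw [le_div_iff₀ h0]
    have : -1 ≤ h / -E := by rw [le_div_iff₀ hE']; linarith
    linarith
  · refine min_eq_left (div_nonneg ?_ h0.le)
    have : -(1 - η) ≤ h / -E := by rw [le_div_iff₀ hE']; push Not at hn; linarith
    linarith

theorem aux_proj (π : X → ℝ) (v : X → ℝ) :
    projPerp π *ᵥ v = v - (sqrtVec π ⬝ᵥ v) • sqrtVec π := by
  rw [projPerp, Matrix.sub_mulVec, Matrix.one_mulVec, Matrix.vecMulVec_mulVec]
  simp

theorem aux_ray {A : Matrix X X ℝ} (hA : A.IsHermitian) (Eb : ℝ)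
    (hEb : ∀ i, Eb ≤ hA.eigenvalues i) (v : X → ℝ) :
    Eb * (v ⬝ᵥ v) ≤ v ⬝ᵥ A *ᵥ v := by
  have hU : (hA.eigenvectorUnitary : Matrix X X ℝ) *
      (hA.eigenvectorUnitary : Matrix X X ℝ)ᴴ = 1 :=
    Unitary.mul_star_self_of_mem hA.eigenvectorUnitary.2
  have hps : (A - Eb • (1 : Matrix X X ℝ)).PosSemidef := by
    have h1 : (Matrix.diagonal (fun i => hA.eigenvalues i - Eb)).PosSemidef :=
      Matrix.PosSemidef.diagonal (fun i => sub_nonneg.2 (hEb i))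
    have h2 := h1.mul_mul_conjTranspose_same (hA.eigenvectorUnitary : Matrix X X ℝ)
    convert h2 using 1
    have h3 : Matrix.diagonal (fun i => hA.eigenvalues i - Eb) =
        Matrix.diagonal hA.eigenvalues - Eb • (1 : Matrix X X ℝ) := by
      ext i j
      by_cases h : i = j <;> simp [Matrix.diagonal, Matrix.one_apply, h]
    rw [h3, Matrix.mul_sub, Matrix.sub_mul, Matrix.mul_smul, Matrix.smul_mul, Matrix.mul_one, hU]
    congr 1
    exact hA.spectral_theorem
  have := hps.dotProduct_mulVec_nonneg v
  simp only [star_trivial, Matrix.sub_mulVec, Matrix.smul_mulVec, Matrix.one_mulVec,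
    dotProduct_sub, dotProduct_smul, smul_eq_mul] at this
  linarith

theorem aux_low (P : Matrix X X ℝ) (π : X → ℝ) (hM : IsMarkov P π)
    (H : X → ℝ) (E : ℝ) (hmin : ∀ x, E ≤ H x) (hE : E < 0)
    (η ω b : ℝ) (hη : η ∈ Set.Ioo (0:ℝ) 1)
    (hω : 0 < ω) (hb : b ∈ Set.Icc (0:ℝ) 1)
    (hSP : ShortPathCond P π b η H E (ω / 2))
    (hHerm : (shortPathHam P π b η H E).IsHermitian) (v : X → ℝ) (hv : v ⬝ᵥ v = 1) :
    -1 - (massLE π H ((1 - η) * E) + 2 * massLE π H ((1 - η) * E) / ω) ≤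
      v ⬝ᵥ shortPathHam P π b η H E *ᵥ v := by
  have hs := aux_ss P π hM
  have hAs := aux_ham P π hM b η H E
  set A := shortPathHam P π b η H E with hAdef
  set m := massLE π H ((1 - η) * E) with hm
  set s := sqrtVec π with hsdef
  set g : X → ℝ := fun x => b * gEta η (H x / |E|) with hg
  have hsym : ∀ u w : X → ℝ, u ⬝ᵥ A *ᵥ w = w ⬝ᵥ A *ᵥ u := by
    intro u w
    have hT : Aᵀ = A := by simpa [Matrix.IsHermitian, Matrix.conjTranspose_eq_transpose_of_trivial] using hHerm
    rw [Matrix.dotProduct_mulVec, ← Matrix.mulVec_transpose, hT, dotProduct_comm]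
  set a := s ⬝ᵥ v with ha
  set w := v - a • s with hw
  have hvw : v = a • s + w := by simp [hw]
  have hsw : s ⬝ᵥ w = 0 := by
    simp only [hw, dotProduct_sub, dotProduct_smul, hs, smul_eq_mul]; rw [← ha]; ring
  have hww : w ⬝ᵥ w = 1 - a ^ 2 := by
    have h1 : v ⬝ᵥ v = a ^ 2 + w ⬝ᵥ w := by
      rw [hvw]
      simp only [dotProduct_add, add_dotProduct, dotProduct_smul, smul_dotProduct, hs, hsw,
        dotProduct_comm w s, smul_eq_mul]
      ring
    linarith
  have hpw : projPerp π *ᵥ w = w := by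
    rw [aux_proj, ← hsdef, hsw]; simp
  have hwA : (-1 + ω / 2) * (w ⬝ᵥ w) ≤ w ⬝ᵥ A *ᵥ w := by
    have h1 := hSP w
    change _ ≤ w ⬝ᵥ _ at h1
    have hpT : (projPerp π)ᵀ = projPerp π := by
      ext i j; simp [projPerp, Matrix.vecMulVec_apply, Matrix.one_apply, eq_comm, mul_comm]
    rw [← Matrix.mulVec_mulVec, hpw, ← Matrix.mulVec_mulVec, Matrix.dotProduct_mulVec,
      ← Matrix.mulVec_transpose, hpT, hpw] at h1
    exact h1
  -- pointwise bounds
  have hgb : ∀ x, -1 ≤ g x ∧ g x ≤ 0 ∧ (¬ H x ≤ (1 - η) * E → g x = 0) := by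
    intro x
    obtain ⟨h1, h2, h3⟩ := aux_g hη hE (hmin x)
    obtain ⟨hb0, hb1⟩ := hb
    refine ⟨?_, ?_, fun hn => ?_⟩
    · simp only [hg]; nlinarith
    · simp only [hg]; nlinarith
    · simp only [hg]; rw [h3 hn, mul_zero]
  have hss : ∀ x, s x * s x = π x := fun x => Real.mul_self_sqrt (hM.pi_pos x).le
  have hm1 : -m ≤ ∑ x, g x * (s x * s x) := by
    rw [hm, massLE, ← Finset.sum_neg_distrib]
    refine Finset.sum_le_sum fun x _ => ?_
    obtain ⟨h1, h2, h3⟩ := hgb x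
    have hp := hM.pi_pos x
    rw [hss]
    by_cases hx : H x ≤ (1 - η) * E
    · rw [Set.indicator_of_mem (by exact hx)]; nlinarith
    · rw [Set.indicator_of_notMem (by exact hx), h3 hx]; simp
  have hm2 : ∑ x, g x ^ 2 * (s x * s x) ≤ m := by
    rw [hm, massLE]
    refine Finset.sum_le_sum fun x _ => ?_
    obtain ⟨h1, h2, h3⟩ := hgb x
    have hp := hM.pi_pos x
    rw [hss]
    by_cases hx : H x ≤ (1 - η) * E
    · rw [Set.indicator_of_mem (by exact hx)]
      have : g x ^ 2 ≤ 1 := by nlinarith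
      nlinarith
    · rw [Set.indicator_of_notMem (by exact hx), h3 hx]; simp
  have hsAs : s ⬝ᵥ A *ᵥ s = -1 + ∑ x, g x * (s x * s x) := by
    rw [hAs, dotProduct_add, dotProduct_neg, hs]
    congr 1
    exact Finset.sum_congr rfl fun x _ => by simp only [hg]; ring
  have hwAs : w ⬝ᵥ A *ᵥ s = ∑ x, g x * s x * w x := by
    rw [hAs, dotProduct_add, dotProduct_neg, dotProduct_comm w s, hsw, neg_zero, zero_add]
    exact Finset.sum_congr rfl fun x _ => by simp only [hg]; ring
  have hvAv : v ⬝ᵥ A *ᵥ v = a ^ 2 * (s ⬝ᵥ A *ᵥ s) + 2 * a * (w ⬝ᵥ A *ᵥ s) + w ⬝ᵥ A *ᵥ w := by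
    rw [hvw]
    simp only [Matrix.mulVec_add, Matrix.mulVec_smul, dotProduct_add, add_dotProduct,
      dotProduct_smul, smul_dotProduct, smul_eq_mul, hsym s w]
    ring
  have hsq : 0 ≤ ω / 2 * (w ⬝ᵥ w) + 2 * a * (∑ x, g x * s x * w x) +
      2 / ω * a ^ 2 * ∑ x, g x ^ 2 * (s x * s x) := by
    rw [dotProduct, Finset.mul_sum, Finset.mul_sum, Finset.mul_sum, ← Finset.sum_add_distrib,
      ← Finset.sum_add_distrib]
    refine Finset.sum_nonneg fun x _ => ?_
    have : ω / 2 * (w x * w x) + 2 * a * (g x * s x * w x) +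
        2 / ω * a ^ 2 * (g x ^ 2 * (s x * s x)) =
        2 / ω * (ω / 2 * w x + a * (g x * s x)) ^ 2 := by field_simp; ring
    rw [this]; positivity
  have ha1 : a ^ 2 ≤ 1 := by
    have : 0 ≤ w ⬝ᵥ w := Finset.sum_nonneg fun x _ => mul_self_nonneg _
    linarith
  have hc0 : 0 ≤ ∑ x, g x ^ 2 * (s x * s x) :=
    Finset.sum_nonneg fun x _ => mul_nonneg (sq_nonneg _) (mul_self_nonneg _)
  have hm0 : 0 ≤ m := le_trans hc0 hm2
  have e1 : 2 / ω * a ^ 2 * ∑ x, g x ^ 2 * (s x * s x) ≤ 2 * m / ω := by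
    calc _ ≤ 2 / ω * 1 * m := by gcongr
      _ = _ := by ring
  have e2 : -m ≤ a ^ 2 * ∑ x, g x * (s x * s x) := by nlinarith [sq_nonneg a]
  rw [hvAv, hsAs, hwAs]
  rw [hww] at hwA hsq
  nlinarith

/-- ground-state energy shift bound. Under the `γ` spectral density
condition and the `ω/2` short-path condition at `b`, the smallest eigenvalue `E_b`
of `H_b` satisfies `-1 - 4·π(E*)^γ/ω < E_b ≤ -1`, so `|E_b| < 1 + 4·π(E*)^γ/ω`. -/
theorem stmt_5 {X : Type*} [Fintype X] [DecidableEq X]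
    (P : Matrix X X ℝ) (π : X → ℝ) (hM : IsMarkov P π) (hrev : IsReversible P π)
    (H : X → ℝ) (Estar : ℝ) (hmin : IsLeast (Set.range H) Estar) (hEstar : Estar < 0)
    (hpiStar : piStar π H Estar < 1)
    (η γ ω b : ℝ) (hη : η ∈ Set.Ioo (0:ℝ) 1) (hγ : γ ∈ Set.Ioc (0:ℝ) 1)
    (hω : ω ∈ Set.Ioo (0:ℝ) 1) (hb : b ∈ Set.Icc (0:ℝ) 1)
    (hSD : massLE π H ((1 - η) * Estar) ≤ piStar π H Estar ^ γ)
    (hSP : ShortPathCond P π b η H Estar (ω / 2))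
    (hHerm : (shortPathHam P π b η H Estar).IsHermitian)
    (Eb : ℝ) (hEb : IsLeast (Set.range hHerm.eigenvalues) Eb) :
    -1 - 4 * piStar π H Estar ^ γ / ω < Eb ∧ Eb ≤ -1 ∧
      |Eb| < 1 + 4 * piStar π H Estar ^ γ / ω := by
  have hmin' : ∀ x, Estar ≤ H x := fun x => hmin.2 ⟨x, rfl⟩
  obtain ⟨i, hi⟩ := hEb.1
  have hpos : 0 < piStar π H Estar := by
    obtain ⟨x, hx⟩ := hmin.1
    refine Finset.sum_pos' (fun y _ => Set.indicator_nonneg (fun z _ => (hM.pi_pos z).le) y)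
      ⟨x, Finset.mem_univ _, ?_⟩
    rw [Set.indicator_of_mem (by exact hx)]
    exact hM.pi_pos x
  have hq : 0 < piStar π H Estar ^ γ := Real.rpow_pos_of_pos hpos γ
  set q := piStar π H Estar ^ γ
  have hup : Eb ≤ -1 := by
    have h1 := aux_ray hHerm Eb (fun j => hEb.2 ⟨j, rfl⟩) (sqrtVec π)
    rw [aux_ham P π hM, dotProduct_add, dotProduct_neg, aux_ss P π hM] at h1
    have h2 : (sqrtVec π ⬝ᵥ fun x => b * gEta η (H x / |Estar|) * sqrtVec π x) ≤ 0 := by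
      refine Finset.sum_nonpos fun x _ => ?_
      have h3 := (aux_g hη hEstar (hmin' x)).2.1
      have h4 := mul_nonneg hb.1 (mul_self_nonneg (sqrtVec π x))
      nlinarith
    linarith
  have hlow : -1 - 4 * q / ω < Eb := by
    let v : X → ℝ := (hHerm.eigenvectorBasis i).ofLp
    have hAv : shortPathHam P π b η H Estar *ᵥ v = Eb • v := by
      rw [← hi]; exact hHerm.mulVec_eigenvectorBasis i
    have hv : v ⬝ᵥ v = 1 := by
      have h1 := hHerm.eigenvectorBasis.orthonormal.1 i
      have h2 := EuclideanSpace.real_norm_sq_eq (hHerm.eigenvectorBasis i)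
      rw [h1] at h2
      simp only [dotProduct, v, ← pow_two]
      linarith
    have h := aux_low P π hM H Estar hmin' hEstar η ω b hη hω.1 hb hSP hHerm v hv
    rw [hAv, dotProduct_smul, hv, smul_eq_mul, mul_one] at h
    have h0 := hω.1
    have h3 : 2 * massLE π H ((1 - η) * Estar) / ω ≤ 2 * q / ω := by gcongr
    have h4 : q < 2 * q / ω := by rw [lt_div_iff₀ h0]; nlinarith [hω.2]
    have h5 : 4 * q / ω = 2 * q / ω + 2 * q / ω := by ring
    linarith
  refine ⟨hlow, hup, ?_⟩
  rw [abs_of_nonpos (by linarith)]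
  linarith
end
end

section
/- Let M = (X, P, π) be a finite Markov chain, H : X → ℝ with minimum E* < 0, and η ∈ (0,1). (a) If there is Δ̃ ≥ 0 with Σ_y P(x,y)·H(y) ≤ H(x) + Δ̃ for all x ∈ X, then H is Δ̃-stable under M. (b) H is always sqrt(‖H‖_P)-stable under M, where ‖H‖_P = max_x Σ_y P(x,y)·(H(x)−H(y))² is the P-pseudo-Lipschitz norm. -/
open Matrix Finset

noncomputable section

variable {X : Type*} [Fintype X] [DecidableEq X]

/-- upper bounds on the stability constant. (a) If
`Σ_y P x y · H y ≤ H x + Δ̃` for all `x` then `H` is `Δ̃`-stable; (b) `H` is always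
`sqrt(‖H‖_P)`-stable. -/
theorem stmt_8 {X : Type*} [Fintype X] [DecidableEq X] [Nonempty X]
    (P : Matrix X X ℝ) (π : X → ℝ) (hM : IsMarkov P π)
    (H : X → ℝ) (Estar : ℝ) (hmin : IsLeast (Set.range H) Estar) (hEstar : Estar < 0)
    (η : ℝ) (hη : η ∈ Set.Ioo (0:ℝ) 1) :
    (∀ Δt : ℝ, 0 ≤ Δt → (∀ x, ∑ y, P x y * H y ≤ H x + Δt) →
      DeltaStable P H Estar η Δt) ∧
    DeltaStable P H Estar η (Real.sqrt (pseudoLipNorm P H)) := by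
  have hE : 0 < |Estar| := abs_pos.mpr hEstar.ne
  have ha : ∀ Δt : ℝ, 0 ≤ Δt → (∀ x, ∑ y, P x y * H y ≤ H x + Δt) →
      DeltaStable P H Estar η Δt := by
    intro Δt _ h x
    refine le_min ?_ ?_
    · exact Finset.sum_nonpos fun y _ =>
        mul_nonpos_of_nonneg_of_nonpos (hM.nonneg x y) (min_le_left _ _)
    · have h1 : ∑ y, P x y * gEta η (H y / |Estar|)
          ≤ ∑ y, P x y * ((H y / |Estar| + 1 - η) / η) :=
        Finset.sum_le_sum fun y _ =>
          mul_le_mul_of_nonneg_left (min_le_right _ _) (hM.nonneg x y)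
      have h2 : ∑ y, P x y * ((H y / |Estar| + 1 - η) / η)
          = ((∑ y, P x y * H y) / |Estar| + 1 - η) / η := by
        have h3 : ∀ y, P x y * ((H y / |Estar| + 1 - η) / η)
            = (P x y * H y) * (1 / |Estar| / η) + P x y * ((1 - η) / η) := by
          intro y; ring
        simp_rw [h3]
        rw [Finset.sum_add_distrib, ← Finset.sum_mul, ← Finset.sum_mul, hM.rowSum x]
        ring
      rw [h2] at h1
      refine h1.trans ?_
      have hη0 := hη.1
      have := h x
      gcongr
  refine ⟨ha, ha _ (Real.sqrt_nonneg _) fun x => ?_⟩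
  have h1 : (∑ y, P x y * (H x - H y)) ^ 2 ≤ ∑ y, P x y * (H x - H y) ^ 2 :=
    Real.pow_arith_mean_le_arith_mean_pow_of_even Finset.univ (fun y => P x y)
      (fun y => H x - H y) (fun y _ => hM.nonneg x y) (hM.rowSum x) even_two
  have h2 : ∑ y, P x y * (H x - H y) ^ 2 ≤ pseudoLipNorm P H :=
    Finset.le_sup' (fun x => ∑ y, P x y * (H x - H y) ^ 2) (Finset.mem_univ x)
  have h3 := (abs_le.mp (Real.abs_le_sqrt (h1.trans h2))).1
  have h4 : ∑ y, P x y * (H x - H y) = H x - ∑ y, P x y * H y := by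
    simp_rw [mul_sub]
    rw [Finset.sum_sub_distrib, ← Finset.sum_mul, hM.rowSum x, one_mul]
  rw [h4] at h3
  linarith
end
end

section
/- Let M = (X, P, π) be a reversible finite Markov chain with |X| = V, such that 1 is a simple eigenvalue of D(P) with eigenvector |√π⟩ and every other eigenvalue of D(P) has absolute value at most 1 − ω for some ω ∈ (0,1). Let H : X → ℝ have minimum E* < 0, fix η ∈ (0,1) and b > 0, let H_b = −D(P) + b·G_η, suppose the ω/2 short-path condition holds at b, and let ψ_b be a unit ground eigenvector of H_b with eigenvalue E_b (so E_b ≤ −1). Then there is a parity s ∈ {0,1} such that for every ℓ ∈ ℕ with ℓ ≡ s (mod 2) and every z ∈ X: ⟨√π| (H_b/|E_b|)^ℓ |z⟩ − V·(1 − ω/2)^ℓ < ⟨√π|ψ_b⟩·⟨ψ_b|z⟩, where |z⟩ is the standard basis vector at z. -/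
open Matrix Finset

noncomputable section

variable {X : Type*} [Fintype X] [DecidableEq X]

theorem symm_dot {X : Type*} [Fintype X] (M : Matrix X X ℝ) (hM : Mᵀ = M) (u v : X → ℝ) :
    u ⬝ᵥ (M *ᵥ v) = v ⬝ᵥ (M *ᵥ u) := by
  rw [Matrix.dotProduct_mulVec, ← Matrix.mulVec_transpose, hM, dotProduct_comm]

theorem core_bound {X : Type*} [Fintype X] (M : Matrix X X ℝ) (hM : Mᵀ = M)
    (φ ψ : X → ℝ) (E r : ℝ) (hr : 0 < r) (hr1 : r < 1) (hE : E ≤ -1)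
    (hψ : ψ ⬝ᵥ ψ = 1) (heig : M *ᵥ ψ = E • ψ)
    (hlow : ∀ v, v ⬝ᵥ φ = 0 → -r * (v ⬝ᵥ v) ≤ v ⬝ᵥ (M *ᵥ v))
    (hup : ∀ v, v ⬝ᵥ (M *ᵥ v) ≤ r * (v ⬝ᵥ v)) :
    ψ ⬝ᵥ φ ≠ 0 ∧ ∀ w, w ⬝ᵥ ψ = 0 →
      (M *ᵥ w) ⬝ᵥ ψ = 0 ∧ (M *ᵥ w) ⬝ᵥ (M *ᵥ w) ≤ r ^ 2 * (w ⬝ᵥ w) := by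
  have hc : ψ ⬝ᵥ φ ≠ 0 := by
    intro h
    have := hlow ψ h
    rw [heig, dotProduct_smul, hψ, smul_eq_mul] at this
    linarith
  have horth : ∀ w, w ⬝ᵥ ψ = 0 → (M *ᵥ w) ⬝ᵥ ψ = 0 := by
    intro w hw
    rw [dotProduct_comm, symm_dot M hM, heig, dotProduct_smul, hw, smul_zero]
  have hlow2 : ∀ w, w ⬝ᵥ ψ = 0 → -r * (w ⬝ᵥ w) ≤ w ⬝ᵥ (M *ᵥ w) := by
    intro w hw
    obtain ⟨t, ht⟩ : ∃ t : ℝ, w ⬝ᵥ φ + t * (ψ ⬝ᵥ φ) = 0 :=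
      ⟨-(w ⬝ᵥ φ) / (ψ ⬝ᵥ φ), by field_simp; ring⟩
    have h := hlow (w + t • ψ) (by
      rw [add_dotProduct, smul_dotProduct, smul_eq_mul]; exact ht)
    have hw' : ψ ⬝ᵥ w = 0 := by rw [dotProduct_comm]; exact hw
    have h3 : ψ ⬝ᵥ (M *ᵥ w) = 0 := by rw [dotProduct_comm]; exact horth w hw
    simp only [mulVec_add, mulVec_smul, add_dotProduct, dotProduct_add, smul_dotProduct,
      dotProduct_smul, smul_eq_mul, heig, hw, hw', hψ, h3] at h
    nlinarith [mul_nonneg (sq_nonneg t) (by linarith : 0 ≤ -r - E)]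
  refine ⟨hc, fun w hw => ⟨horth w hw, ?_⟩⟩
  have ho := horth w hw
  set u := M *ᵥ w with hu
  have h1 := hup (u + r • w)
  have h2 := hlow2 (u - r • w) (by
    rw [sub_dotProduct, smul_dotProduct, hw, ho]; simp)
  have e1 : w ⬝ᵥ (M *ᵥ u) = u ⬝ᵥ u := by rw [symm_dot M hM]
  have e2 : w ⬝ᵥ u = u ⬝ᵥ w := dotProduct_comm _ _
  simp only [mulVec_add, mulVec_sub, mulVec_smul, add_dotProduct, dotProduct_add, sub_dotProduct,
    dotProduct_sub, smul_dotProduct, dotProduct_smul, smul_eq_mul, e1, e2, ← hu] at h1 h2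
  have h4 : r * (u ⬝ᵥ u) ≤ r * (r ^ 2 * (w ⬝ᵥ w)) := by nlinarith
  exact le_of_mul_le_mul_left h4 hr

theorem core_final {X : Type*} [Fintype X] [DecidableEq X] (M : Matrix X X ℝ) (hM : Mᵀ = M)
    (φ ψ : X → ℝ) (E r : ℝ) (hr : 0 < r) (hr1 : r < 1) (hE : E ≤ -1)
    (hφ : φ ⬝ᵥ φ = 1) (hψ : ψ ⬝ᵥ ψ = 1) (heig : M *ᵥ ψ = E • ψ)
    (hlow : ∀ v, v ⬝ᵥ φ = 0 → -r * (v ⬝ᵥ v) ≤ v ⬝ᵥ (M *ᵥ v))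
    (hup : ∀ v, v ⬝ᵥ (M *ᵥ v) ≤ r * (v ⬝ᵥ v)) (l : ℕ) (hl : l % 2 = 0) (z : X) :
    (φ ᵥ* ((|E|⁻¹ • M) ^ l)) z - r ^ l < (φ ⬝ᵥ ψ) * ψ z := by
  obtain ⟨hc, hW⟩ := core_bound M hM φ ψ E r hr hr1 hE hψ heig hlow hup
  set A := |E|⁻¹ • M with hA
  have hEa : |E| = -E := abs_of_neg (by linarith)
  have hAψ : A *ᵥ ψ = -ψ := by
    rw [hA, smul_mulVec, heig, smul_smul, hEa]
    have : (-E)⁻¹ * E = -1 := by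
      have : E ≠ 0 := by linarith
      field_simp
    rw [this]; simp
  have hi0 : 0 ≤ |E|⁻¹ := by positivity
  have hi1 : |E|⁻¹ ≤ 1 := inv_le_one_of_one_le₀ (by rw [hEa]; linarith)
  have hAt : Aᵀ = A := by rw [hA, transpose_smul, hM]
  have hstep : ∀ w, w ⬝ᵥ ψ = 0 → (A *ᵥ w) ⬝ᵥ ψ = 0 ∧
      (A *ᵥ w) ⬝ᵥ (A *ᵥ w) ≤ r ^ 2 * (w ⬝ᵥ w) := by
    intro w hw
    obtain ⟨h1, h2⟩ := hW w hw
    rw [hA, smul_mulVec]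
    refine ⟨by rw [smul_dotProduct, h1, smul_zero], ?_⟩
    rw [smul_dotProduct, dotProduct_smul, smul_eq_mul, smul_eq_mul]
    have h0 : 0 ≤ (M *ᵥ w) ⬝ᵥ (M *ᵥ w) := by
      simp only [dotProduct]; exact Finset.sum_nonneg fun i _ => mul_self_nonneg _
    have : |E|⁻¹ * |E|⁻¹ ≤ 1 := by nlinarith
    nlinarith
  have hiter : ∀ (n : ℕ) w, w ⬝ᵥ ψ = 0 → (A ^ n *ᵥ w) ⬝ᵥ ψ = 0 ∧
      (A ^ n *ᵥ w) ⬝ᵥ (A ^ n *ᵥ w) ≤ (r ^ n) ^ 2 * (w ⬝ᵥ w) := by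
    intro n w hw
    induction n with
    | zero => simp [hw]
    | succ k ih =>
      have h := hstep _ ih.1
      rw [pow_succ', ← mulVec_mulVec]
      refine ⟨h.1, h.2.trans ?_⟩
      calc _ ≤ r ^ 2 * ((r ^ k) ^ 2 * (w ⬝ᵥ w)) := by gcongr; exact ih.2
        _ = _ := by ring
  have hψl : ∀ m : ℕ, A ^ (2 * m) *ᵥ ψ = ψ := by
    intro m
    induction m with
    | zero => simp
    | succ k ih =>
      rw [mul_add, pow_add, ← mulVec_mulVec, mul_one, pow_two, ← mulVec_mulVec, hAψ,
        mulVec_neg, hAψ, neg_neg, ih]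
  obtain ⟨m, rfl⟩ : ∃ m, l = 2 * m := ⟨l / 2, by omega⟩
  have hcs : ψ ⬝ᵥ φ = φ ⬝ᵥ ψ := dotProduct_comm _ _
  set c := φ ⬝ᵥ ψ with hcdef
  rw [hcs] at hc
  set u := φ - c • ψ with hu
  have huψ : u ⬝ᵥ ψ = 0 := by
    rw [hu, sub_dotProduct, smul_dotProduct, hψ]; simp [← hcdef]
  have huu : u ⬝ᵥ u = 1 - c ^ 2 := by
    simp only [hu, sub_dotProduct, dotProduct_sub, smul_dotProduct, dotProduct_smul, smul_eq_mul,
      hψ, hφ, hcs, ← hcdef]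
    ring
  have hφu : φ = u + c • ψ := by rw [hu]; simp
  have hpt : (A ^ (2 * m))ᵀ = A ^ (2 * m) := by rw [transpose_pow, hAt]
  have hval : φ ᵥ* (A ^ (2 * m)) = A ^ (2 * m) *ᵥ u + c • ψ := by
    rw [← mulVec_transpose, hpt]
    conv_lhs => rw [hφu]
    rw [mulVec_add, mulVec_smul, hψl]
  rw [hval]
  simp only [Pi.add_apply, Pi.smul_apply, smul_eq_mul]
  have hb := (hiter (2 * m) u huψ).2
  set y := A ^ (2 * m) *ᵥ u
  have hz : y z * y z ≤ y ⬝ᵥ y := by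
    simp only [dotProduct]
    exact Finset.single_le_sum (f := fun i => y i * y i) (fun i _ => mul_self_nonneg _)
      (Finset.mem_univ z)
  have hrp : 0 < r ^ (2 * m) := by positivity
  have hlt : y z < r ^ (2 * m) := by
    apply lt_of_pow_lt_pow_left₀ 2 hrp.le
    have : 0 < c ^ 2 := by positivity
    rw [huu] at hb
    nlinarith [mul_pos (pow_pos hrp 2) this]
  linarith

/-- approximate ground-state projector bound. For a suitable parity `s`,
for all `ℓ ≡ s (mod 2)` and all `z`,
`⟨√π|(H_b/|E_b|)^ℓ|z⟩ - V·(1 - ω/2)^ℓ < ⟨√π|ψ_b⟩·⟨ψ_b|z⟩`. -/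
theorem stmt_9 {X : Type*} [Fintype X] [DecidableEq X]
    (P : Matrix X X ℝ) (π : X → ℝ) (hM : IsMarkov P π) (hrev : IsReversible P π)
    (ω : ℝ) (hω : ω ∈ Set.Ioo (0:ℝ) 1)
    (hDpi : (discMat P π).mulVec (sqrtVec π) = sqrtVec π)
    (habs : ∀ v : X → ℝ, (∑ x, v x * sqrtVec π x) = 0 →
      |∑ x, v x * (discMat P π).mulVec v x| ≤ (1 - ω) * ∑ x, v x * v x)
    (H : X → ℝ) (Estar : ℝ) (hmin : IsLeast (Set.range H) Estar) (hEstar : Estar < 0)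
    (η b : ℝ) (hη : η ∈ Set.Ioo (0:ℝ) 1) (hb : 0 < b)
    (hSP : ShortPathCond P π b η H Estar (ω / 2))
    (ψb : X → ℝ) (Eb : ℝ) (hψ : ∑ x, ψb x * ψb x = 1)
    (heig : (shortPathHam P π b η H Estar).mulVec ψb = Eb • ψb)
    (hground : ∀ v : X → ℝ, Eb * (∑ x, v x * v x) ≤
      ∑ x, v x * (shortPathHam P π b η H Estar).mulVec v x)
    (hEb : Eb ≤ -1) :
    ∃ s : ℕ, s < 2 ∧ ∀ ℓ : ℕ, ℓ % 2 = s → ∀ z : X,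
      (∑ x, sqrtVec π x * ((|Eb|⁻¹ • shortPathHam P π b η H Estar) ^ ℓ) x z)
          - (Fintype.card X : ℝ) * (1 - ω / 2) ^ ℓ
        < (∑ x, sqrtVec π x * ψb x) * ψb z := by
  refine ⟨0, by norm_num, fun l hl z => ?_⟩
  obtain ⟨hω0, hω1⟩ := hω
  set φ := sqrtVec π with hφd
  set M := shortPathHam P π b η H Estar with hMd
  have hDs : (discMat P π)ᵀ = discMat P π := by
    ext x y
    simp only [transpose_apply, discMat, of_apply]
    have hx := hM.pi_pos x
    have hy := hM.pi_pos y
    have h := hrev x y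
    rw [Real.sqrt_div hx.le, Real.sqrt_div hy.le]
    have sx := Real.sqrt_pos.2 hx
    have sy := Real.sqrt_pos.2 hy
    field_simp
    rw [Real.sq_sqrt hx.le, Real.sq_sqrt hy.le]
    linarith
  have hMs : Mᵀ = M := by
    simp [hMd, shortPathHam, GEtaMat, hDs]
  have hφ : φ ⬝ᵥ φ = 1 := by
    rw [← hM.pi_sum]
    simp only [dotProduct, hφd, sqrtVec]
    exact Finset.sum_congr rfl fun x _ => Real.mul_self_sqrt (hM.pi_pos x).le
  have hlow : ∀ v, v ⬝ᵥ φ = 0 → -(1 - ω / 2) * (v ⬝ᵥ v) ≤ v ⬝ᵥ (M *ᵥ v) := by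
    intro v hv
    have h := hSP v
    have hv' : φ ⬝ᵥ v = 0 := by rw [dotProduct_comm]; exact hv
    have e1 : projPerp π *ᵥ v = v := by
      rw [projPerp, sub_mulVec, one_mulVec, vecMulVec_mulVec, ← hφd, hv']; simp
    have e2 : v ᵥ* projPerp π = v := by
      rw [projPerp, vecMul_sub, vecMul_one, vecMul_vecMulVec, ← hφd, hv]; simp
    have e3 : v ⬝ᵥ ((projPerp π * M * projPerp π) *ᵥ v) = v ⬝ᵥ (M *ᵥ v) := by
      rw [← mulVec_mulVec, ← mulVec_mulVec, e1, dotProduct_mulVec, e2]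
    have h' : (-1 + ω / 2) * (v ⬝ᵥ v) ≤ v ⬝ᵥ ((projPerp π * M * projPerp π) *ᵥ v) := h
    rw [e3] at h'
    linarith
  have hnn : ∀ v : X → ℝ, 0 ≤ v ⬝ᵥ v := fun v => by
    simp only [dotProduct]; exact Finset.sum_nonneg fun i _ => mul_self_nonneg _
  have hup : ∀ v, v ⬝ᵥ (M *ᵥ v) ≤ (1 - ω / 2) * (v ⬝ᵥ v) := by
    intro v
    have hG : v ⬝ᵥ (GEtaMat η H Estar *ᵥ v) ≤ 0 := by
      simp only [dotProduct, GEtaMat, mulVec_diagonal]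
      refine Finset.sum_nonpos fun x _ => ?_
      have : gEta η (H x / |Estar|) ≤ 0 := min_le_left _ _
      nlinarith [mul_self_nonneg (v x)]
    have hD : -(1 - ω) * (v ⬝ᵥ v) ≤ v ⬝ᵥ (discMat P π *ᵥ v) := by
      obtain ⟨a, u, hv, hu⟩ : ∃ (a : ℝ) (u : X → ℝ), v = u + a • φ ∧ u ⬝ᵥ φ = 0 :=
        ⟨v ⬝ᵥ φ, v - (v ⬝ᵥ φ) • φ, by simp, by
          rw [sub_dotProduct, smul_dotProduct, hφ]; simp⟩
      have hu' : φ ⬝ᵥ u = 0 := by rw [dotProduct_comm]; exact hu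
      have h1 : |u ⬝ᵥ (discMat P π *ᵥ u)| ≤ (1 - ω) * (u ⬝ᵥ u) := habs u hu
      have h2 := (abs_le.1 h1).1
      have h3 : φ ⬝ᵥ (discMat P π *ᵥ u) = 0 := by
        rw [symm_dot _ hDs, hDpi, hu]
      rw [hv]
      simp only [mulVec_add, mulVec_smul, add_dotProduct, dotProduct_add, smul_dotProduct,
        dotProduct_smul, smul_eq_mul, hDpi, hu, hu', hφ, h3]
      nlinarith [sq_nonneg a]
    have e : v ⬝ᵥ (M *ᵥ v) = -(v ⬝ᵥ (discMat P π *ᵥ v)) + b * (v ⬝ᵥ (GEtaMat η H Estar *ᵥ v)) := by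
      rw [hMd, shortPathHam, add_mulVec, neg_mulVec, smul_mulVec, dotProduct_add, dotProduct_neg,
        dotProduct_smul, smul_eq_mul]
    rw [e]
    nlinarith [hnn v, mul_nonneg hb.le (neg_nonneg.2 hG), mul_nonneg hω0.le (hnn v)]
  have key := core_final M hMs φ ψb Eb (1 - ω / 2) (by linarith) (by linarith) hEb hφ hψ heig
    hlow hup l hl z
  have hcard : (1 : ℝ) ≤ Fintype.card X := by
    exact_mod_cast Fintype.card_pos_iff.2 ⟨z⟩
  have hrp : 0 < (1 - ω / 2) ^ l := pow_pos (by linarith) l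
  have key' : (∑ x, φ x * ((|Eb|⁻¹ • M) ^ l) x z) - (1 - ω / 2) ^ l
      < (∑ x, φ x * ψb x) * ψb z := key
  nlinarith
end
end

section
/- Let M = (X, P, π) be a reversible finite Markov chain, H : X → ℝ with minimum E* < 0, η ∈ (0,1), b ∈ (0,1), and α ∈ (0,1), and suppose the pair (M, H) is α-subdepolarizing. Set f(x) = −g_η(−x), A = D(P), and B = b·F, where F is the diagonal matrix with entries f(H(z)/E*). Let z* ∈ X satisfy H(z*) = E*. Then for every T ∈ ℕ and all nonnegative integers c_0, c_1, …, c_T: ⟨√π| A·B^{c_T} · A·B^{c_{T−1}} ⋯ A·B^{c_1} · A·B^{c_0} |z*⟩ ≥ sqrt(π(z*)) · b^{c_0+⋯+c_T} · ∏_{j=0}^{T} f((1−α)^j)^{c_j}. -/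
open Matrix Finset

noncomputable section

variable {X : Type*} [Fintype X] [DecidableEq X]

lemma fEta_nonneg' (η x : ℝ) : 0 ≤ fEta η x := by
  unfold fEta gEta
  have := min_le_left 0 ((-x + 1 - η) / η)
  linarith

lemma fEta_cont' (η : ℝ) : Continuous (fEta η) := by
  unfold fEta gEta
  simp only [div_eq_mul_inv]
  fun_prop

lemma sub_fintype {X : Type*} [Fintype X] {P : Matrix X X ℝ} {H : X → ℝ} {Estar η α : ℝ}
    (hsub : Subdepolarizing P H Estar η α) {ι : Type*} [Fintype ι] (c : ι → ℝ)
    (hc : ∀ t, c t ∈ Set.Ioc (0:ℝ) 1) (x : X) :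
    (∏ t, fEta η (c t * (1 - α) * H x / Estar)) ≤
      ∑ y, P x y * ∏ t, fEta η (c t * H y / Estar) := by
  have h1 : ∀ s ∈ Set.Ioo (0:ℝ) 1, (∏ t, fEta η ((s * c t) * (1 - α) * H x / Estar)) ≤
      ∑ y, P x y * ∏ t, fEta η ((s * c t) * H y / Estar) := by
    intro s hs
    let e := (Fintype.equivFin ι).symm
    have := hsub (Fintype.card ι) (fun t => s * c (e t)) (fun t => by
      obtain ⟨h0, h1⟩ := hc (e t)
      exact ⟨mul_pos hs.1 h0, by nlinarith [hs.1, hs.2]⟩) x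
    rw [e.prod_comp (fun t => fEta η ((s * c t) * (1 - α) * H x / Estar))] at this
    refine this.trans (le_of_eq ?_)
    refine Finset.sum_congr rfl fun y _ => ?_
    rw [e.prod_comp (fun t => fEta η ((s * c t) * H y / Estar))]
  have hf := fEta_cont' η
  have hL : Continuous (fun s : ℝ => ∏ t, fEta η ((s * c t) * (1 - α) * H x / Estar)) := by
    simp only [div_eq_mul_inv]
    fun_prop
  have hR : Continuous (fun s : ℝ => ∑ y, P x y * ∏ t, fEta η ((s * c t) * H y / Estar)) := by
    simp only [div_eq_mul_inv]
    fun_prop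
  have l1 := (hL.tendsto 1).mono_left (nhdsWithin_le_nhds (s := Set.Iio 1))
  have l2 := (hR.tendsto 1).mono_left (nhdsWithin_le_nhds (s := Set.Iio 1))
  have := le_of_tendsto_of_tendsto l1 l2 (by
    filter_upwards [Ioo_mem_nhdsLT (zero_lt_one' ℝ)] with s hs using h1 s hs)
  simpa using this

lemma subdepol_pow {X : Type*} [Fintype X] {P : Matrix X X ℝ} {H : X → ℝ} {Estar η α : ℝ}
    (hsub : Subdepolarizing P H Estar η α) {ι : Type*} [Fintype ι] (a : ι → ℝ) (c : ι → ℕ)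
    (ha : ∀ t, a t ∈ Set.Ioc (0:ℝ) 1) (x : X) :
    (∏ t, fEta η (a t * (1 - α) * H x / Estar) ^ c t) ≤
      ∑ y, P x y * ∏ t, fEta η (a t * H y / Estar) ^ c t := by
  have := sub_fintype hsub (ι := Σ t, Fin (c t)) (fun p => a p.1) (fun p => ha p.1) x
  simpa [Fintype.prod_sigma] using this

lemma overlap_aux {X : Type*} [Fintype X] [DecidableEq X]
    (P : Matrix X X ℝ) (π : X → ℝ) (hM : IsMarkov P π) (hrev : IsReversible P π)
    (H : X → ℝ) (Estar : ℝ)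
    (η b α : ℝ) (hb : b ∈ Set.Ioo (0:ℝ) 1) (hα : α ∈ Set.Ioo (0:ℝ) 1)
    (hsub : Subdepolarizing P H Estar η α)
    (T : ℕ) (c : Fin T → ℕ) (z : X) :
    Real.sqrt (π z) * b ^ (∑ j, c j) *
        ∏ j : Fin T, fEta η ((1 - α) ^ (j : ℕ) * H z / Estar) ^ (c j)
      ≤ ∑ x, sqrtVec π x *
          ((List.ofFn fun j : Fin T =>
              discMat P π *
                (b • Matrix.diagonal fun z => fEta η (H z / Estar)) ^ (c j)).reverse.prod)
            x z := by
  induction T generalizing z with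
  | zero => simp [sqrtVec, Matrix.one_apply]
  | succ T ih =>
    have ih' := ih (fun j => c j.succ)
    rw [List.ofFn_succ, List.reverse_cons, List.prod_append, List.prod_singleton]
    set M := (List.ofFn fun j : Fin T => discMat P π *
      (b • Matrix.diagonal fun z => fEta η (H z / Estar)) ^ (c j.succ)).reverse.prod with hMdef
    have hentry : ∀ x, (M * (discMat P π *
        (b • Matrix.diagonal fun z => fEta η (H z / Estar)) ^ (c 0))) x z =
        (∑ y, M x y * discMat P π y z) * (b * fEta η (H z / Estar)) ^ c 0 := by
      intro x
      have : (b • Matrix.diagonal fun z => fEta η (H z / Estar)) =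
          Matrix.diagonal fun z => b * fEta η (H z / Estar) := by
        rw [← Matrix.diagonal_smul]; rfl
      rw [this, Matrix.diagonal_pow, ← Matrix.mul_assoc, Matrix.mul_diagonal, Matrix.mul_apply]
      simp
    simp only [hentry]
    have hA : ∀ y, Real.sqrt (π y) * discMat P π y z = Real.sqrt (π z) * P z y := by
      intro y
      have hy := hM.pi_pos y
      have hzp := hM.pi_pos z
      have hr := hrev y z
      have e1 := Real.mul_self_sqrt hy.le
      have e2 := Real.mul_self_sqrt hzp.le
      have e3 := Real.sqrt_pos.2 hzp
      simp only [discMat, Matrix.of_apply, Real.sqrt_div hy.le]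
      field_simp
      rw [Real.sq_sqrt hy.le, Real.sq_sqrt hzp.le]
      linarith
    have hAnn : ∀ y, 0 ≤ discMat P π y z := fun y =>
      mul_nonneg (Real.sqrt_nonneg _) (hM.nonneg y z)
    have hswap : ∑ x, sqrtVec π x * ((∑ y, M x y * discMat P π y z) *
        (b * fEta η (H z / Estar)) ^ c 0) =
        (∑ y, (∑ x, sqrtVec π x * M x y) * discMat P π y z) *
          (b * fEta η (H z / Estar)) ^ c 0 := by
      simp only [Finset.sum_mul, Finset.mul_sum]
      rw [Finset.sum_comm]
      refine Finset.sum_congr rfl fun y _ => Finset.sum_congr rfl fun x _ => ?_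
      ring
    rw [hswap]
    have hpos : 0 ≤ (b * fEta η (H z / Estar)) ^ c 0 :=
      pow_nonneg (mul_nonneg hb.1.le (fEta_nonneg' _ _)) _
    have hs := subdepol_pow hsub (fun j : Fin T => (1 - α) ^ (j : ℕ)) (fun j => c j.succ)
      (fun j => ⟨pow_pos (by linarith [hα.2]) _,
        pow_le_one₀ (by linarith [hα.2]) (by linarith [hα.1])⟩) z
    have key : Real.sqrt (π z) * b ^ (∑ j : Fin T, c j.succ) *
        (∏ j : Fin T, fEta η ((1 - α) ^ (j : ℕ) * (1 - α) * H z / Estar) ^ c j.succ) ≤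
        ∑ y, (∑ x, sqrtVec π x * M x y) * discMat P π y z := by
      calc _ ≤ Real.sqrt (π z) * b ^ (∑ j : Fin T, c j.succ) * _ :=
            mul_le_mul_of_nonneg_left hs
              (mul_nonneg (Real.sqrt_nonneg _) (pow_nonneg hb.1.le _))
        _ = ∑ y, (Real.sqrt (π y) * b ^ (∑ j : Fin T, c j.succ) *
              ∏ j : Fin T, fEta η ((1 - α) ^ (j : ℕ) * H y / Estar) ^ (c j.succ)) *
                discMat P π y z := by
            rw [Finset.mul_sum]
            refine Finset.sum_congr rfl fun y _ => ?_
            linear_combination (-(b ^ (∑ j : Fin T, c j.succ) *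
              ∏ j : Fin T, fEta η ((1 - α) ^ (j : ℕ) * H y / Estar) ^ (c j.succ))) * hA y
        _ ≤ _ := Finset.sum_le_sum fun y _ => mul_le_mul_of_nonneg_right (ih' y) (hAnn y)
    refine le_trans (le_of_eq ?_) (mul_le_mul_of_nonneg_right key hpos)
    rw [Fin.sum_univ_succ, Fin.prod_univ_succ, pow_add, mul_pow]
    simp only [Fin.val_zero, pow_zero, one_mul, Fin.val_succ, pow_succ]
    ring

/-- overlap lower bound for alternating products. With `A = D(P)` and
`B = b·F` (`F` diagonal with entries `f(H z / E*)`), for an optimal `z*`,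
`⟨√π| A·B^{c_T} ⋯ A·B^{c_0} |z*⟩ ≥ √(π z*) · b^{Σ c_j} · ∏_j f((1-α)^j)^{c_j}`. -/
theorem stmt_10 {X : Type*} [Fintype X] [DecidableEq X]
    (P : Matrix X X ℝ) (π : X → ℝ) (hM : IsMarkov P π) (hrev : IsReversible P π)
    (H : X → ℝ) (Estar : ℝ) (hmin : IsLeast (Set.range H) Estar) (hEstar : Estar < 0)
    (η b α : ℝ) (hη : η ∈ Set.Ioo (0:ℝ) 1) (hb : b ∈ Set.Ioo (0:ℝ) 1)
    (hα : α ∈ Set.Ioo (0:ℝ) 1)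
    (hsub : Subdepolarizing P H Estar η α)
    (zstar : X) (hz : H zstar = Estar)
    (T : ℕ) (c : Fin (T + 1) → ℕ) :
    Real.sqrt (π zstar) * b ^ (∑ j, c j) *
        ∏ j : Fin (T + 1), fEta η ((1 - α) ^ (j : ℕ)) ^ (c j)
      ≤ ∑ x, sqrtVec π x *
          ((List.ofFn fun j : Fin (T + 1) =>
              discMat P π *
                (b • Matrix.diagonal fun z => fEta η (H z / Estar)) ^ (c j)).reverse.prod)
            x zstar := by
  have h := overlap_aux P π hM hrev H Estar η b α hb hα hsub (T + 1) c zstar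
  have e : ∀ a : ℝ, a * H zstar / Estar = a := fun a => by
    rw [hz]; exact mul_div_cancel_right₀ a hEstar.ne
  simp only [e] at h
  exact h
end
end

section
/- Let M = (X, P, π) be a reversible finite Markov chain satisfying a log-Sobolev inequality with constant ω > 0, and let H : X → ℝ have ‖H‖_P > 0, minimum E* < 0, and 0 < π(E*) < 1. Fix η ∈ (0,1) with E_π[H] ≥ (1−η)E*. Then P_{x∼π}[H(x) ≤ (1−η)E*] ≤ π(E*)^γ with γ = ω·(E_π[H] − (1−η)E*)² / (‖H‖_P · ln(1/π(E*))). -/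
open Matrix Finset

noncomputable section

variable {X : Type*} [Fintype X] [DecidableEq X]

lemma aux_exp (u v : ℝ) :
    (Real.exp u - Real.exp v) ^ 2 ≤ (u - v) ^ 2 * (Real.exp u ^ 2 + Real.exp v ^ 2) := by
  have key : ∀ u v : ℝ, v ≤ u →
      (Real.exp u - Real.exp v) ^ 2 ≤ (u - v) ^ 2 * (Real.exp u ^ 2 + Real.exp v ^ 2) := by
    intro u v h
    have h1 : Real.exp u - Real.exp v ≤ (u - v) * Real.exp u := by
      have := Real.add_one_le_exp (v - u)
      have h2 : Real.exp v = Real.exp (v - u) * Real.exp u := by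
        rw [← Real.exp_add]; congr 1; ring
      rw [h2]
      nlinarith [Real.exp_pos u]
    have h0 : 0 ≤ Real.exp u - Real.exp v := sub_nonneg.2 (Real.exp_le_exp.2 h)
    have h3 := pow_le_pow_left₀ h0 h1 2
    nlinarith [mul_nonneg (sq_nonneg (u - v)) (sq_nonneg (Real.exp v))]
  rcases le_total v u with h | h
  · exact key u v h
  · have := key v u h
    nlinarith

lemma aux_dir {X : Type*} [Fintype X] [DecidableEq X]
    (P : Matrix X X ℝ) (π : X → ℝ) (hM : IsMarkov P π) (hrev : IsReversible P π) (f : X → ℝ) :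
    dirichletForm P π f = (∑ x, ∑ y, π x * P x y * (f x - f y) ^ 2) / 2 := by
  have h1 : ∑ x, ∑ y, π x * P x y * f x ^ 2 = ∑ x, π x * f x ^ 2 := by
    refine sum_congr rfl fun x _ => ?_
    rw [← sum_mul, ← mul_sum, hM.rowSum, mul_one]
  have h2 : ∑ x, ∑ y, π x * P x y * f y ^ 2 = ∑ x, π x * f x ^ 2 := by
    rw [sum_comm]
    refine sum_congr rfl fun x _ => ?_
    rw [← sum_mul, hM.stationary]
  have h3 : dirichletForm P π f = ∑ x, π x * f x ^ 2 - ∑ x, ∑ y, π x * P x y * (f x * f y) := by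
    unfold dirichletForm
    rw [← sum_sub_distrib]
    refine sum_congr rfl fun x _ => ?_
    simp only [Matrix.mulVec, dotProduct]
    have : ∑ y, π x * P x y * (f x * f y) = π x * f x * ∑ y, P x y * f y := by
      rw [mul_sum]; exact sum_congr rfl fun y _ => by ring
    rw [this]; ring
  have h4 : ∑ x, ∑ y, π x * P x y * (f x - f y) ^ 2 =
      ∑ x, ∑ y, π x * P x y * f x ^ 2 + ∑ x, ∑ y, π x * P x y * f y ^ 2
        - 2 * ∑ x, ∑ y, π x * P x y * (f x * f y) := by
    simp only [mul_sum, ← sum_add_distrib, ← sum_sub_distrib]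
    exact sum_congr rfl fun x _ => sum_congr rfl fun y _ => by ring
  rw [h4, h1, h2, h3]; ring

lemma aux_dir_le {X : Type*} [Fintype X] [DecidableEq X] [Nonempty X]
    (P : Matrix X X ℝ) (π : X → ℝ) (hM : IsMarkov P π) (hrev : IsReversible P π)
    (H : X → ℝ) (l : ℝ) :
    dirichletForm P π (fun x => Real.exp (-(l * H x) / 2)) ≤
      l ^ 2 * pseudoLipNorm P H / 4 * ∑ x, π x * Real.exp (-(l * H x)) := by
  rw [aux_dir P π hM hrev]
  have hE : ∀ x, Real.exp (-(l * H x) / 2) ^ 2 = Real.exp (-(l * H x)) := by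
    intro x; rw [← Real.exp_nat_mul]; congr 1; push_cast; ring
  have hL : ∀ x, ∑ y, P x y * (H x - H y) ^ 2 ≤ pseudoLipNorm P H := fun x =>
    Finset.le_sup' (fun x => ∑ y, P x y * (H x - H y) ^ 2) (mem_univ x)
  set A := ∑ x, ∑ y, π x * P x y * (H x - H y) ^ 2 * Real.exp (-(l * H x)) with hA
  have hB : ∑ x, ∑ y, π x * P x y * (H x - H y) ^ 2 * Real.exp (-(l * H y)) = A := by
    rw [sum_comm, hA]
    refine sum_congr rfl fun x _ => sum_congr rfl fun y _ => ?_
    rw [hrev y x]; ring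
  have hAL : A ≤ pseudoLipNorm P H * ∑ x, π x * Real.exp (-(l * H x)) := by
    rw [hA, mul_sum]
    refine sum_le_sum fun x _ => ?_
    have h1 : ∑ y, π x * P x y * (H x - H y) ^ 2 * Real.exp (-(l * H x)) =
        (∑ y, P x y * (H x - H y) ^ 2) * (π x * Real.exp (-(l * H x))) := by
      rw [sum_mul]; exact sum_congr rfl fun y _ => by ring
    rw [h1]
    exact mul_le_mul_of_nonneg_right (hL x) (mul_nonneg (hM.pi_pos x).le (Real.exp_pos _).le)
  have h5 : ∑ x, ∑ y, π x * P x y *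
      (Real.exp (-(l * H x) / 2) - Real.exp (-(l * H y) / 2)) ^ 2 ≤ l ^ 2 / 4 * (A + A) := by
    nth_rewrite 2 [← hB]
    rw [hA]
    simp only [mul_sum, ← sum_add_distrib]
    refine sum_le_sum fun x _ => sum_le_sum fun y _ => ?_
    have := aux_exp (-(l * H x) / 2) (-(l * H y) / 2)
    rw [hE, hE] at this
    have := mul_le_mul_of_nonneg_left this (mul_nonneg (hM.pi_pos x).le (hM.nonneg x y))
    refine this.trans (le_of_eq ?_)
    ring
  have := mul_le_mul_of_nonneg_left hAL (show 0 ≤ l ^ 2 / 4 by positivity)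
  linarith

lemma aux_herbst {X : Type*} [Fintype X] [DecidableEq X] [Nonempty X]
    (π : X → ℝ) (hpos : ∀ x, 0 < π x) (hsum : ∑ x, π x = 1) (H : X → ℝ) (c : ℝ)
    (hent : ∀ l : ℝ, 0 < l → entPi π (fun x => Real.exp (-(l * H x))) ≤
      c * l ^ 2 * ∑ x, π x * Real.exp (-(l * H x))) (l : ℝ) (hl : 0 < l) :
    ∑ x, π x * Real.exp (-(l * H x)) ≤ Real.exp (c * l ^ 2 - l * ∑ x, π x * H x) := by
  set Z : ℝ → ℝ := fun l => ∑ x, π x * Real.exp (-(l * H x)) with hZ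
  set Z' : ℝ → ℝ := fun l => ∑ x, π x * (Real.exp (-(l * H x)) * -H x) with hZ'
  have hZpos : ∀ l, 0 < Z l := fun l =>
    sum_pos (fun x _ => mul_pos (hpos x) (Real.exp_pos _)) univ_nonempty
  have hd : ∀ l, HasDerivAt Z (Z' l) l := by
    intro l
    refine HasDerivAt.fun_sum fun x _ => ?_
    refine HasDerivAt.const_mul _ ?_
    refine HasDerivAt.exp ?_
    have h0 := ((hasDerivAt_id' l).mul_const (H x)).fun_neg
    rwa [one_mul] at h0
  set ψ : ℝ → ℝ := fun l => Real.log (Z l) - c * l ^ 2 with hψ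
  have hdψ : ∀ l, HasDerivAt ψ (Z' l / Z l - c * (2 * l)) l := by
    intro l
    refine ((hd l).log (hZpos l).ne').sub ?_
    simpa using (hasDerivAt_pow 2 l).const_mul c
  have hdh : ∀ l, 0 < l → HasDerivAt (fun l => ψ l / l)
      (((Z' l / Z l - c * (2 * l)) * l - ψ l * 1) / l ^ 2) l := fun l hl =>
    (hdψ l).div (hasDerivAt_id l) hl.ne'
  have hanti : AntitoneOn (fun l => ψ l / l) (Set.Ioi 0) := by
    refine antitoneOn_of_deriv_nonpos (convex_Ioi 0)
      (fun l hl => (hdh l hl).continuousAt.continuousWithinAt) ?_ ?_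
    · rw [interior_Ioi]
      exact fun l hl => (hdh l hl).differentiableAt.differentiableWithinAt
    · rw [interior_Ioi]
      intro l hl
      rw [(hdh l hl).deriv]
      refine div_nonpos_of_nonpos_of_nonneg ?_ (sq_nonneg l)
      have he := hent l hl
      have h1 : entPi π (fun x => Real.exp (-(l * H x))) = l * Z' l - Z l * Real.log (Z l) := by
        simp only [entPi, Real.log_exp, hZ, hZ', mul_sum]
        congr 1
        exact sum_congr rfl fun x _ => by ring
      rw [h1] at he
      change l * Z' l - Z l * Real.log (Z l) ≤ c * l ^ 2 * Z l at he
      have h2 : l * (Z' l / Z l) - Real.log (Z l) ≤ c * l ^ 2 := by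
        have : l * (Z' l / Z l) - Real.log (Z l) = (l * Z' l - Z l * Real.log (Z l)) / Z l := by
          have := (hZpos l).ne'
          field_simp
        rw [this, div_le_iff₀ (hZpos l)]
        exact he
      simp only [hψ]
      nlinarith
  have hZ0 : Z 0 = 1 := by simp [hZ, hsum]
  have hψ0 : ψ 0 = 0 := by simp [hψ, hZ0]
  have hZ0' : Z' 0 = -∑ x, π x * H x := by simp [hZ']
  have hlim : Filter.Tendsto (fun l => ψ l / l) (nhdsWithin 0 (Set.Ioi 0))
      (nhds (-∑ x, π x * H x)) := by
    have h := hdψ 0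
    rw [hZ0, hZ0'] at h
    have h := (hasDerivAt_iff_tendsto_slope.1 h).mono_left
      (show nhdsWithin (0:ℝ) (Set.Ioi 0) ≤ nhdsWithin 0 {0}ᶜ from
        nhdsWithin_mono (0:ℝ) (fun y hy => ne_of_gt hy))
    simp only [slope_fun_def, hψ0] at h
    simpa [div_eq_inv_mul] using h
  have hle : ψ l / l ≤ -∑ x, π x * H x := by
    refine ge_of_tendsto hlim ?_
    have : Set.Ioo (0:ℝ) l ∈ nhdsWithin 0 (Set.Ioi 0) := Ioo_mem_nhdsGT hl
    filter_upwards [this] with y hy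
    exact hanti hy.1 hl hy.2.le
  rw [div_le_iff₀ hl] at hle
  change Z l ≤ _
  rw [← Real.log_le_iff_le_exp (hZpos l)]
  simp only [hψ] at hle
  linarith

/-- Herbst argument corollary. Under a log-Sobolev inequality with
constant `ω`, `P_{x∼π}[H ≤ (1-η)E*] ≤ π(E*)^γ` with
`γ = ω·(E_π[H] - (1-η)E*)²/(‖H‖_P · ln(1/π(E*)))`. -/
theorem stmt_11 {X : Type*} [Fintype X] [DecidableEq X] [Nonempty X]
    (P : Matrix X X ℝ) (π : X → ℝ) (hM : IsMarkov P π) (hrev : IsReversible P π)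
    (ω : ℝ) (hω : 0 < ω) (hLS : LogSobolev P π ω)
    (H : X → ℝ) (hLip : 0 < pseudoLipNorm P H)
    (Estar : ℝ) (hmin : IsLeast (Set.range H) Estar) (hEstar : Estar < 0)
    (hps : piStar π H Estar ∈ Set.Ioo (0:ℝ) 1)
    (η : ℝ) (hη : η ∈ Set.Ioo (0:ℝ) 1)
    (hmean : (1 - η) * Estar ≤ ∑ x, π x * H x) :
    massLE π H ((1 - η) * Estar) ≤
      piStar π H Estar ^
        (ω * ((∑ x, π x * H x) - (1 - η) * Estar) ^ 2 /
          (pseudoLipNorm P H * Real.log (1 / piStar π H Estar))) := by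
  set L := pseudoLipNorm P H with hLdef
  set p := piStar π H Estar with hp
  set m := ∑ x, π x * H x with hm
  set a := (1 - η) * Estar with ha
  have hlog : 0 < Real.log (1 / p) := Real.log_pos (by rw [lt_div_iff₀ hps.1]; linarith [hps.2])
  have hR : p ^ (ω * (m - a) ^ 2 / (L * Real.log (1 / p))) = Real.exp (-(ω * (m - a) ^ 2 / L)) := by
    rw [Real.rpow_def_of_pos hps.1]
    congr 1
    have h1 : Real.log p = -Real.log (1 / p) := by rw [one_div, Real.log_inv, neg_neg]
    rw [h1]
    field_simp
  rw [hR]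
  have hent : ∀ l : ℝ, 0 < l → entPi π (fun x => Real.exp (-(l * H x))) ≤
      (L / (4 * ω)) * l ^ 2 * ∑ x, π x * Real.exp (-(l * H x)) := by
    intro l _
    have h1 := (hLS (fun x => Real.exp (-(l * H x) / 2))).trans (aux_dir_le P π hM hrev H l)
    have hE : ∀ x, Real.exp (-(l * H x) / 2) ^ 2 = Real.exp (-(l * H x)) := by
      intro x; rw [← Real.exp_nat_mul]; congr 1; push_cast; ring
    simp only [hE] at h1
    rw [mul_comm, ← le_div_iff₀ hω] at h1
    refine h1.trans (le_of_eq ?_)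
    field_simp
    rw [← hLdef, mul_comm]
  have hmass : ∀ l : ℝ, 0 ≤ l → massLE π H a ≤
      (∑ x, π x * Real.exp (-(l * H x))) * Real.exp (l * a) := by
    intro l hl
    rw [massLE, sum_mul]
    refine sum_le_sum fun x _ => ?_
    rw [mul_assoc, ← Real.exp_add]
    have hx := hM.pi_pos x
    by_cases h : H x ≤ a
    · rw [Set.indicator_of_mem (by exact h)]
      have : 1 ≤ Real.exp (-(l * H x) + l * a) := Real.one_le_exp (by nlinarith)
      nlinarith
    · rw [Set.indicator_of_notMem (by exact h)]
      positivity
  rcases hmean.eq_or_lt with h | h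
  · have := hmass 0 le_rfl
    simp only [zero_mul, neg_zero, Real.exp_zero, mul_one, hM.pi_sum] at this
    simpa [← h] using this
  · set l := 2 * ω * (m - a) / L with hl
    have hlpos : 0 < l := by
      have : 0 < m - a := sub_pos.2 h
      positivity
    have h1 := aux_herbst π hM.pi_pos hM.pi_sum H _ hent l hlpos
    refine (hmass l hlpos.le).trans ?_
    refine (mul_le_mul_of_nonneg_right h1 (Real.exp_pos _).le).trans (le_of_eq ?_)
    rw [← Real.exp_add]
    congr 1
    rw [← hm, hl]
    field_simp
    ring
end
end

section
/- Let G be a graph on vertex set [n] with edge indicators e_{ij} ∈ {0,1}, let 1 ≤ k ≤ n−1, and for x ∈ {−1,1}^n with exactly k coordinates equal to +1 define H(x) = −Σ_{i<j} e_{ij}·(1−x_i x_j)/2. Let P be the transposition walk on weight-k strings: from x, choose uniformly one of the k(n−k) pairs (i,j) with x_i = +1 and x_j = −1 and swap them. Then for every such x: E_{y∼P(x,·)}[H(y)] − H(x) = cut(x)·(n−2)/(k(n−k)) − (2/k)·A(x) − (2/(n−k))·B(x), where cut(x) is the number of edges of G whose endpoints have opposite signs in x, A(x) is the number of edges with both endpoints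 +1, and B(x) is the number of edges with both endpoints −1. In particular, E_{y∼P(x,·)}[H(y)] ≤ H(x) + C*_k·(n−2)/(k(n−k)), where C*_k = max{cut(z) : z ∈ {−1,1}^n, |z| = k} is the maximum weight-k cut of G. -/
open Finset
open scoped Classical

noncomputable section

/-- The MaxCut-Hamming cost: minus the number of cut edges
`H(z) = -Σ_{i<j} e i j (1 - z i z j)/2`. -/
def cutHam {n : ℕ} (e : Fin n → Fin n → ℝ) (z : Fin n → ℝ) : ℝ :=
  -∑ i, ∑ j, if i < j then e i j * (1 - z i * z j) / 2 else 0

/-- Swap the values of coordinates `i` and `j`. -/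
def swapCoords {n : ℕ} (z : Fin n → ℝ) (i j : Fin n) : Fin n → ℝ :=
  Function.update (Function.update z i (z j)) j (z i)

/-- Expected cost after one step of the transposition walk from `z`: a uniformly random
pair `(i,j)` with `z i = +1`, `z j = -1` is chosen (there are `k(n-k)` of them) and
swapped. -/
def transpExp {n : ℕ} (k : ℕ) (e : Fin n → Fin n → ℝ) (z : Fin n → ℝ) : ℝ :=
  (1 / ((k : ℝ) * ((n : ℝ) - (k : ℝ)))) *
    ∑ i ∈ univ.filter (fun i => z i = 1), ∑ j ∈ univ.filter (fun j => z j = -1),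
      cutHam e (swapCoords z i j)

/-- Number (weighted by indicators `e`) of edges cut by `z`. -/
def cutCount {n : ℕ} (e : Fin n → Fin n → ℝ) (z : Fin n → ℝ) : ℝ :=
  ∑ i, ∑ j, if i < j ∧ z i ≠ z j then e i j else 0

/-- Number of edges with both endpoints equal to `+1`. -/
def samePlus {n : ℕ} (e : Fin n → Fin n → ℝ) (z : Fin n → ℝ) : ℝ :=
  ∑ i, ∑ j, if i < j ∧ z i = 1 ∧ z j = 1 then e i j else 0

/-- Number of edges with both endpoints equal to `-1`. -/
def sameMinus {n : ℕ} (e : Fin n → Fin n → ℝ) (z : Fin n → ℝ) : ℝ :=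
  ∑ i, ∑ j, if i < j ∧ z i = -1 ∧ z j = -1 then e i j else 0

theorem aux_swap {n : ℕ} (x : Fin n → ℝ) (i j a : Fin n) (hi : x i = 1) (hj : x j = -1) :
    swapCoords x i j a = x a - 2 * (if a = i then 1 else 0) + 2 * (if a = j then 1 else 0) := by
  have hij : i ≠ j := by
    rintro rfl
    linarith
  unfold swapCoords
  by_cases h2 : a = j
  · subst h2
    simp [hij.symm, hi, hj]
    norm_num
  · by_cases h1 : a = i
    · subst h1
      simp [h2, hi, hj]
      norm_num
    · simp [h1, h2]

theorem aux_pair {n : ℕ} (x : Fin n → ℝ) (hx : ∀ i, x i = 1 ∨ x i = -1)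
    (p m : ℝ) (hp : ((univ.filter fun i => x i = 1).card : ℝ) = p)
    (hm : ((univ.filter fun i => x i = -1).card : ℝ) = m)
    (a b : Fin n) (hab : a ≠ b) :
    ∑ i ∈ univ.filter (fun i => x i = 1), ∑ j ∈ univ.filter (fun j => x j = -1),
      (1 - swapCoords x i j a * swapCoords x i j b) / 2
    = (if x a ≠ x b then p * m - (p + m - 2) else 0)
      + 2 * m * (if x a = 1 ∧ x b = 1 then 1 else 0)
      + 2 * p * (if x a = -1 ∧ x b = -1 then 1 else 0) := by
  have key : ∀ i ∈ univ.filter (fun i => x i = 1), ∀ j ∈ univ.filter (fun j => x j = -1),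
      (1 - swapCoords x i j a * swapCoords x i j b) / 2
      = (1 - x a * x b) / 2
        + (x a * (if b = i then 1 else 0) + x b * (if a = i then 1 else 0))
        + (2 * (if b = i then 1 else 0)) * (if a = j then 1 else 0)
        + (2 * (if a = i then 1 else 0)) * (if b = j then 1 else 0)
        - x a * (if b = j then 1 else 0) - x b * (if a = j then 1 else 0) := by
    intro i hi j hj
    simp only [mem_filter, mem_univ, true_and] at hi hj
    rw [aux_swap x i j a hi hj, aux_swap x i j b hi hj]
    have h1 : (if a = i then (1:ℝ) else 0) * (if b = i then (1:ℝ) else 0) = 0 := by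
      split_ifs with h h' <;> simp
      exact hab (h.trans h'.symm)
    have h2 : (if a = j then (1:ℝ) else 0) * (if b = j then (1:ℝ) else 0) = 0 := by
      split_ifs with h h' <;> simp
      exact hab (h.trans h'.symm)
    linear_combination (-2) * h1 - 2 * h2
  rw [Finset.sum_congr rfl (fun i hi => Finset.sum_congr rfl (key i hi))]
  simp only [Finset.sum_add_distrib, Finset.sum_sub_distrib, ← Finset.mul_sum, ← Finset.sum_mul,
    Finset.sum_const, nsmul_eq_mul, hp, hm, Finset.sum_ite_eq, mem_filter, mem_univ, true_and]
  rcases hx a with h | h <;> rcases hx b with h' | h' <;> simp [h, h'] <;> norm_num <;> ring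

/-- exact drift formula for the transposition walk on the MaxCut-Hamming
cost function, and the resulting upper bound via the maximum weight-`k` cut `C*_k`. -/
theorem stmt_14 {n : ℕ} (k : ℕ) (hn : 2 ≤ n) (hk1 : 1 ≤ k) (hk2 : k < n)
    (e : Fin n → Fin n → ℝ) (he : ∀ i j, e i j = 0 ∨ e i j = 1)
    (x : Fin n → ℝ) (hx : ∀ i, x i = 1 ∨ x i = -1)
    (hxk : (univ.filter fun i => x i = 1).card = k) :
    transpExp k e x - cutHam e x =
        cutCount e x * ((n : ℝ) - 2) / ((k : ℝ) * ((n : ℝ) - (k : ℝ)))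
          - 2 / (k : ℝ) * samePlus e x
          - 2 / ((n : ℝ) - (k : ℝ)) * sameMinus e x ∧
    ∀ Cstar : ℝ,
      (∀ z : Fin n → ℝ, (∀ i, z i = 1 ∨ z i = -1) →
        (univ.filter fun i => z i = 1).card = k → cutCount e z ≤ Cstar) →
      transpExp k e x ≤
        cutHam e x + Cstar * ((n : ℝ) - 2) / ((k : ℝ) * ((n : ℝ) - (k : ℝ))) := by
  have hm : ((univ.filter fun i => x i = -1).card : ℝ) = (n : ℝ) - k := by
    have h := Finset.card_filter_add_card_filter_not (s := (univ : Finset (Fin n))) (fun i => x i = 1)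
    have h2 : (univ.filter fun i => ¬ x i = 1) = (univ.filter fun i => x i = -1) := by
      ext i
      simp only [mem_filter, mem_univ, true_and]
      rcases hx i with h | h <;> rw [h] <;> norm_num
    rw [h2, hxk, Finset.card_univ, Fintype.card_fin] at h
    have h' : (k : ℝ) + ((univ.filter fun i => x i = -1).card : ℝ) = n := by exact_mod_cast h
    linarith
  have hk0 : (0:ℝ) < k := by exact_mod_cast hk1
  have hnk : (0:ℝ) < (n:ℝ) - k := by
    have : (k:ℝ) < n := by exact_mod_cast hk2
    linarith
  have hn2 : (0:ℝ) ≤ (n:ℝ) - 2 := by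
    have : (2:ℝ) ≤ n := by exact_mod_cast hn
    linarith
  have hH : cutHam e x = - cutCount e x := by
    unfold cutHam cutCount
    congr 1
    refine Finset.sum_congr rfl fun a _ => Finset.sum_congr rfl fun b _ => ?_
    rcases hx a with h | h <;> rcases hx b with h' | h' <;> rw [h, h'] <;> norm_num
  have hS : ∑ i ∈ univ.filter (fun i => x i = 1), ∑ j ∈ univ.filter (fun j => x j = -1),
      cutHam e (swapCoords x i j)
      = -((k * ((n:ℝ) - k) - (n - 2)) * cutCount e x + 2 * ((n:ℝ) - k) * samePlus e x
        + 2 * k * sameMinus e x) := by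
    unfold cutHam cutCount samePlus sameMinus
    simp only [Finset.sum_neg_distrib]
    congr 1
    simp only [Finset.mul_sum, ← Finset.sum_add_distrib]
    rw [Finset.sum_congr rfl (fun i _ => Finset.sum_comm), Finset.sum_comm]
    refine Finset.sum_congr rfl fun a _ => ?_
    rw [Finset.sum_congr rfl (fun i _ => Finset.sum_comm), Finset.sum_comm]
    refine Finset.sum_congr rfl fun b _ => ?_
    by_cases hab : a < b
    · have := aux_pair x hx k (n - k) (by exact_mod_cast hxk) hm a b hab.ne
      simp only [hab, if_true, true_and, mul_div_assoc, ← Finset.mul_sum]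
      rw [this]
      split_ifs <;> ring
    · simp [hab]
  have hA : 0 ≤ samePlus e x := by
    refine Finset.sum_nonneg fun a _ => Finset.sum_nonneg fun b _ => ?_
    rcases he a b with h | h <;> rw [h] <;> split_ifs <;> norm_num
  have hB : 0 ≤ sameMinus e x := by
    refine Finset.sum_nonneg fun a _ => Finset.sum_nonneg fun b _ => ?_
    rcases he a b with h | h <;> rw [h] <;> split_ifs <;> norm_num
  have main : transpExp k e x - cutHam e x =
        cutCount e x * ((n : ℝ) - 2) / ((k : ℝ) * ((n : ℝ) - (k : ℝ)))
          - 2 / (k : ℝ) * samePlus e x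
          - 2 / ((n : ℝ) - (k : ℝ)) * sameMinus e x := by
    unfold transpExp
    rw [hS, hH]
    field_simp
    ring
  refine ⟨main, fun C hC => ?_⟩
  have h1 : cutCount e x * ((n : ℝ) - 2) / ((k : ℝ) * ((n : ℝ) - (k : ℝ)))
      ≤ C * ((n : ℝ) - 2) / ((k : ℝ) * ((n : ℝ) - (k : ℝ))) := by
    have := hC x hx hxk
    gcongr
  have h2 : 0 ≤ 2 / (k : ℝ) * samePlus e x := by positivity
  have h3 : 0 ≤ 2 / ((n : ℝ) - (k : ℝ)) * sameMinus e x := by positivity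
  linarith
end
end

section
/- Let G be a d-regular graph on n vertices with d ≥ 3, let I(G) denote the collection of independent sets of G, let λ ∈ (0,1], and define the hardcore partition function Z(λ) = Σ_{S ∈ I(G)} λ^{|S|} and Gibbs measure π_λ(S) = λ^{|S|}/Z(λ). Let S* be a maximum independent set of G, so |S*| = α(G), the independence number. Then π_λ(S*) ≥ λ^{α(G)} / (2(1+λ)^d − 1)^{n/(2d)}. In particular, if m ≥ α(G), then π_λ(S*) ≥ λ^{m} / (2(1+λ)^d − 1)^{n/(2d)}. -/
open Finset

noncomputable section

lemma cheb (R : Finset ℕ) (a b : ℕ → ℝ)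
    (h : ∀ j ∈ R, ∀ k ∈ R, j ≤ k → a k * b j ≤ a j * b k) :
    (∑ k ∈ R, (k:ℝ) * a k) * (∑ k ∈ R, b k) ≤ (∑ k ∈ R, (k:ℝ) * b k) * (∑ k ∈ R, a k) := by
  have key : 0 ≤ ∑ j ∈ R, ∑ k ∈ R, ((k:ℝ) - j) * (a j * b k - a k * b j) := by
    refine sum_nonneg fun j hj => sum_nonneg fun k hk => ?_
    rcases le_total j k with hjk | hjk
    · have h1 := h j hj k hk hjk
      have h2 : (j:ℝ) ≤ k := by exact_mod_cast hjk
      exact mul_nonneg (by linarith) (by linarith)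
    · have h1 := h k hk j hj hjk
      have h2 : (k:ℝ) ≤ j := by exact_mod_cast hjk
      exact mul_nonneg_of_nonpos_of_nonpos (by linarith) (by linarith)
  have e : ∑ j ∈ R, ∑ k ∈ R, ((k:ℝ) - j) * (a j * b k - a k * b j)
      = ∑ j ∈ R, ∑ k ∈ R, (a j * (k * b k)) + ∑ j ∈ R, ∑ k ∈ R, ((j * b j) * a k)
        - ∑ j ∈ R, ∑ k ∈ R, (b j * (k * a k)) - ∑ j ∈ R, ∑ k ∈ R, ((j * a j) * b k) := by
    simp only [← sum_add_distrib, ← sum_sub_distrib]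
    refine sum_congr rfl fun j _ => sum_congr rfl fun k _ => ?_
    ring
  simp only [← sum_mul_sum] at e
  rw [e] at key
  linarith

lemma down_count {V : Type*} [DecidableEq V] (N : Finset V) (F : Finset (Finset V))
    (hF : ∀ T ∈ F, T ⊆ N) (hdown : ∀ T ∈ F, ∀ S, S ⊆ T → S ∈ F) (j k : ℕ) (hjk : j ≤ k) :
    #{T ∈ F | #T = k} * (#N).choose j ≤ #{T ∈ F | #T = j} * (#N).choose k := by
  have h1 : #{T ∈ F | #T = k} * k.choose j ≤ #{T ∈ F | #T = j} * (#N - j).choose (k - j) := by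
    refine card_mul_le_card_mul (fun T S => S ⊆ T) ?_ ?_
    · intro T hT
      rw [mem_filter] at hT
      rw [← hT.2, ← card_powersetCard]
      refine card_le_card fun S hS => ?_
      rw [mem_powersetCard] at hS
      rw [mem_bipartiteAbove, mem_filter]
      exact ⟨⟨hdown T hT.1 S hS.1, hS.2⟩, hS.1⟩
    · intro S hS
      rw [mem_filter] at hS
      have hc : #(N \ S) = #N - j := by
        rw [card_sdiff_of_subset (hF S hS.1), hS.2]
      rw [← hc, ← card_powersetCard]
      refine card_le_card_of_injOn (fun T => T \ S) ?_ ?_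
      · intro T hT
        rw [mem_coe, mem_bipartiteBelow, mem_filter] at hT
        rw [mem_coe, mem_powersetCard]
        refine ⟨sdiff_subset_sdiff (hF T hT.1.1) le_rfl, ?_⟩
        rw [card_sdiff_of_subset hT.2, hT.1.2, hS.2]
      · intro T hT U hU h
        rw [mem_coe, mem_bipartiteBelow] at hT hU
        have := congrArg (fun W => W ∪ S) h
        simpa [sdiff_union_of_subset hT.2, sdiff_union_of_subset hU.2] using this
  by_cases hk : k ≤ #N
  · have h2 := Nat.choose_mul (n := #N) hjk
    have hp : 0 < k.choose j := Nat.choose_pos hjk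
    refine Nat.le_of_mul_le_mul_right ?_ hp
    calc _ = #{T ∈ F | #T = k} * k.choose j * (#N).choose j := by ring
      _ ≤ #{T ∈ F | #T = j} * (#N - j).choose (k - j) * (#N).choose j := by gcongr
      _ = #{T ∈ F | #T = j} * ((#N).choose j * (#N - j).choose (k - j)) := by ring
      _ = _ := by rw [← h2]; ring
  · have : #{T ∈ F | #T = k} = 0 := by
      rw [card_eq_zero, filter_eq_empty_iff]
      intro T hT h
      exact hk (h ▸ card_le_card (hF T hT))
    simp [this]

lemma down_sum {V : Type*} [DecidableEq V] (N : Finset V) (F : Finset (Finset V))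
    (hF : ∀ T ∈ F, T ⊆ N) (g : ℕ → ℝ) :
    ∑ T ∈ F, g #T = ∑ k ∈ range (#N + 1), (#{T ∈ F | #T = k} : ℝ) * g k := by
  rw [← sum_fiberwise_of_maps_to (s := F) (t := range (#N + 1)) (g := fun T => #T)]
  · refine sum_congr rfl fun k _ => ?_
    rw [sum_congr rfl (g := fun _ => g k)]
    · simp
    · intro T hT
      rw [(mem_filter.1 hT).2]
  · intro T hT
    rw [mem_range]
    exact Nat.lt_succ_of_le (card_le_card (hF T hT))

lemma binom_d (d : ℕ) (x : ℝ) :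
    ∑ k ∈ range d, ((k + 1 : ℕ) : ℝ) * (((d.choose (k+1) : ℕ):ℝ) * x ^ (k+1))
      = d * x * (1 + x) ^ (d - 1) := by
  cases d with
  | zero => simp
  | succ d =>
    rw [Nat.add_sub_cancel, add_comm (1:ℝ) x, add_pow, mul_sum]
    refine sum_congr rfl fun k _ => ?_
    have h : ((d + 1 : ℕ) : ℝ) * (d.choose k : ℝ)
      = ((d+1).choose (k+1) : ℝ) * ((k + 1 : ℕ):ℝ) := by
      exact_mod_cast Nat.add_one_mul_choose_eq d k
    simp only [one_pow, mul_one]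
    calc _ = (((d+1).choose (k+1) : ℝ) * ((k + 1 : ℕ):ℝ)) * x ^ (k+1) := by ring
      _ = _ := by rw [← h]; ring

lemma binom_s (d : ℕ) (x : ℝ) :
    ∑ k ∈ range d, (((d.choose (k+1) : ℕ):ℝ) * x ^ (k+1)) = (1 + x) ^ d - 1 := by
  rw [add_comm (1:ℝ) x, add_pow, sum_range_succ']
  simp [mul_comm]

lemma down_ineq {V : Type*} [DecidableEq V] (N : Finset V) (F : Finset (Finset V))
    (hF : ∀ T ∈ F, T ⊆ N) (hdown : ∀ T ∈ F, ∀ S, S ⊆ T → S ∈ F) (he : ∅ ∈ F)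
    (x : ℝ) (hx : 0 ≤ x) :
    ((1 + x) ^ #N - 1) * ∑ T ∈ F, (#T : ℝ) * x ^ #T
      ≤ #N * x * (1 + x) ^ (#N - 1) * (∑ T ∈ F, x ^ #T - 1) := by
  have h0 : #{T ∈ F | #T = 0} = 1 := by
    rw [card_eq_one]
    refine ⟨∅, ?_⟩
    ext T
    simp only [mem_filter, card_eq_zero, mem_singleton]
    exact ⟨fun h => h.2, fun h => ⟨h ▸ he, h⟩⟩
  rw [down_sum N F hF (fun k => (k:ℝ) * x ^ k), down_sum N F hF (fun k => x ^ k),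
    sum_range_succ', sum_range_succ', h0, ← binom_s, ← binom_d]
  have := cheb (Ico 1 (#N + 1)) (fun k => (#{T ∈ F | #T = k} : ℝ) * x ^ k)
    (fun k => ((#N).choose k : ℝ) * x ^ k) (by
      intro j _ k _ hjk
      have h := down_count N F hF hdown j k hjk
      have h' : (#{T ∈ F | #T = k} : ℝ) * (#N).choose j ≤ #{T ∈ F | #T = j} * (#N).choose k := by
        exact_mod_cast h
      have := mul_le_mul_of_nonneg_right h' (mul_nonneg (pow_nonneg hx k) (pow_nonneg hx j))
      linarith)
  simp only [sum_Ico_eq_sum_range, Nat.add_sub_cancel, add_comm 1] at this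
  simp only [Nat.cast_zero, zero_mul, mul_zero, add_zero, pow_zero, Nat.cast_one, mul_one,
    add_sub_cancel_right]
  rw [mul_comm (∑ k ∈ range #N, _)]
  convert this using 3
  ring

section graph
variable {n : ℕ} (G : SimpleGraph (Fin n)) [DecidableRel G.Adj]

def Ind : Finset (Finset (Fin n)) :=
  univ.filter (fun S : Finset (Fin n) => ∀ u ∈ S, ∀ v ∈ S, ¬G.Adj u v)

lemma mem_Ind {S : Finset (Fin n)} : S ∈ Ind G ↔ ∀ u ∈ S, ∀ v ∈ S, ¬G.Adj u v := by
  simp [Ind]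

lemma Ind_sub {S T : Finset (Fin n)} (hT : T ∈ Ind G) (h : S ⊆ T) : S ∈ Ind G := by
  rw [mem_Ind] at *
  exact fun u hu v hv => hT u (h hu) v (h hv)

def KK (v : Fin n) : Finset (Finset (Fin n)) :=
  {J ∈ Ind G | v ∉ J ∧ Disjoint J (G.neighborFinset v)}

def FF (v : Fin n) (J : Finset (Fin n)) : Finset (Finset (Fin n)) :=
  {T ∈ (G.neighborFinset v).powerset | J ∪ T ∈ Ind G}

lemma sum_not_mem (v : Fin n) (g : Finset (Fin n) → ℝ) :
    ∑ I ∈ Ind G with v ∉ I, g I = ∑ J ∈ KK G v, ∑ T ∈ FF G v J, g (J ∪ T) := by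
  rw [sum_sigma']
  refine sum_bij' (fun I _ => ⟨I \ G.neighborFinset v, I ∩ G.neighborFinset v⟩)
    (fun p _ => p.1 ∪ p.2) ?_ ?_ ?_ ?_ ?_
  · intro I hI
    rw [mem_filter] at hI
    simp only [mem_sigma, KK, FF, mem_filter, mem_powerset]
    refine ⟨⟨Ind_sub G hI.1 sdiff_subset, fun h => hI.2 (mem_sdiff.1 h).1, sdiff_disjoint⟩,
      inter_subset_right, ?_⟩
    rw [sdiff_union_inter]
    exact hI.1
  · rintro ⟨J, T⟩ h
    simp only [mem_sigma, KK, FF, mem_filter, mem_powerset] at h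
    simp only [mem_filter, mem_union, not_or]
    refine ⟨h.2.2, h.1.2.1, fun hv => ?_⟩
    have := h.2.1 hv
    simp at this
  · intro I hI
    simp [sdiff_union_inter]
  · rintro ⟨J, T⟩ h
    simp only [mem_sigma, KK, FF, mem_filter, mem_powerset] at h
    have h1 : (J ∪ T) \ G.neighborFinset v = J := by
      rw [union_sdiff_distrib, sdiff_eq_empty_iff_subset.2 h.2.1, union_empty,
        sdiff_eq_self_of_disjoint h.1.2.2]
    have h2 : (J ∪ T) ∩ G.neighborFinset v = T := by
      rw [union_inter_distrib_right, disjoint_iff_inter_eq_empty.1 h.1.2.2, empty_union,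
        inter_eq_left.2 h.2.1]
    simp only [h1, h2]
  · intro I hI
    simp [sdiff_union_inter]

lemma sum_with_mem (v : Fin n) (g : Finset (Fin n) → ℝ) :
    ∑ I ∈ Ind G with v ∈ I, g I = ∑ J ∈ KK G v, g (insert v J) := by
  refine sum_bij' (fun I _ => I.erase v) (fun J _ => insert v J) ?_ ?_ ?_ ?_ ?_
  · intro I hI
    rw [mem_filter] at hI
    simp only [KK, mem_filter]
    refine ⟨Ind_sub G hI.1 (erase_subset _ _), notMem_erase _ _, ?_⟩
    rw [disjoint_left]
    intro u hu hu'
    rw [SimpleGraph.mem_neighborFinset] at hu'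
    exact (mem_Ind G).1 hI.1 v hI.2 u (mem_of_mem_erase hu) hu'
  · intro J hJ
    simp only [KK, mem_filter] at hJ
    obtain ⟨hJ, hv, hd⟩ := hJ
    rw [mem_Ind] at hJ
    rw [disjoint_left] at hd
    simp only [SimpleGraph.mem_neighborFinset] at hd
    rw [mem_filter, mem_Ind]
    refine ⟨?_, mem_insert_self _ _⟩
    intro a ha b hb hab
    rw [mem_insert] at ha hb
    rcases ha with rfl | ha <;> rcases hb with rfl | hb
    · exact G.irrefl hab
    · exact hd hb hab
    · exact hd ha hab.symm
    · exact hJ a ha b hb hab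
  · intro I hI
    exact insert_erase (mem_filter.1 hI).2
  · intro J hJ
    simp only [KK, mem_filter] at hJ
    exact erase_insert hJ.2.1
  · intro I hI
    rw [insert_erase (mem_filter.1 hI).2]

lemma vertex_ineq (d : ℕ) (hreg : G.IsRegularOfDegree d) (v : Fin n) (x : ℝ) (hx : 0 ≤ x)
    (hd : 1 ≤ d) :
    d * (1 + x) ^ d * (∑ I ∈ Ind G with v ∈ I, x ^ #I)
      + ((1 + x) ^ d - 1) * (∑ I ∈ Ind G, (#(I ∩ G.neighborFinset v) : ℝ) * x ^ #I)
      ≤ d * x * (1 + x) ^ (d - 1) * ∑ I ∈ Ind G, x ^ #I := by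
  have hN : #(G.neighborFinset v) = d := hreg v
  rw [← sum_filter_add_sum_filter_not (Ind G) (fun I => v ∈ I) (fun I => x ^ #I),
    ← sum_filter_add_sum_filter_not (Ind G) (fun I => v ∈ I)
      (fun I => (#(I ∩ G.neighborFinset v) : ℝ) * x ^ #I)]
  have hz : ∑ I ∈ Ind G with v ∈ I, (#(I ∩ G.neighborFinset v) : ℝ) * x ^ #I = 0 := by
    refine sum_eq_zero fun I hI => ?_
    rw [mem_filter] at hI
    have : I ∩ G.neighborFinset v = ∅ := by
      ext u
      simp only [mem_inter, SimpleGraph.mem_neighborFinset, notMem_empty, iff_false, not_and]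
      exact fun hu => (mem_Ind G).1 hI.1 v hI.2 u hu
    simp [this]
  rw [hz, zero_add, sum_with_mem, sum_not_mem, sum_not_mem, ← sum_add_distrib, mul_sum, mul_sum, mul_sum,
    ← sum_add_distrib]
  refine sum_le_sum fun J hJ => ?_
  simp only [KK, mem_filter] at hJ
  obtain ⟨hJ, hv, hdj⟩ := hJ
  have hc : ∀ T ∈ FF G v J, #(J ∪ T) = #J + #T := by
    intro T hT
    simp only [FF, mem_filter, mem_powerset] at hT
    exact card_union_of_disjoint (hdj.mono_right hT.1)
  have hi : ∀ T ∈ FF G v J, (J ∪ T) ∩ G.neighborFinset v = T := by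
    intro T hT
    simp only [FF, mem_filter, mem_powerset] at hT
    rw [union_inter_distrib_right, disjoint_iff_inter_eq_empty.1 hdj, empty_union,
        inter_eq_left.2 hT.1]
  have e1 : ∑ T ∈ FF G v J, x ^ #(J ∪ T) = x ^ #J * ∑ T ∈ FF G v J, x ^ #T := by
    rw [mul_sum]
    refine sum_congr rfl fun T hT => ?_
    rw [hc T hT, pow_add]
  have e2 : ∑ T ∈ FF G v J, (#((J ∪ T) ∩ G.neighborFinset v) : ℝ) * x ^ #(J ∪ T)
      = x ^ #J * ∑ T ∈ FF G v J, (#T : ℝ) * x ^ #T := by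
    rw [mul_sum]
    refine sum_congr rfl fun T hT => ?_
    rw [hc T hT, hi T hT, pow_add]
    ring
  rw [e1, e2, card_insert_of_notMem hv]
  have main := down_ineq (G.neighborFinset v) (FF G v J)
    (by intro T hT; simp only [FF, mem_filter, mem_powerset] at hT; exact hT.1)
    (by
      intro T hT S hS
      simp only [FF, mem_filter, mem_powerset] at hT ⊢
      exact ⟨hS.trans hT.1, Ind_sub G hT.2 (union_subset_union_right hS)⟩)
    (by simp [FF, hJ]) x hx
  rw [hN] at main
  have hm := mul_le_mul_of_nonneg_left main (pow_nonneg hx #J)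
  obtain ⟨e, rfl⟩ : ∃ e, d = e + 1 := ⟨d - 1, by omega⟩
  rw [Nat.add_sub_cancel] at *
  have q : (1 + x) ^ (e + 1) = (1 + x) ^ e * (1 + x) := pow_succ _ _
  have q2 : x ^ (#J + 1) = x ^ #J * x := pow_succ _ _
  rw [q2]
  rw [q] at hm ⊢
  linarith

lemma occ (d : ℕ) (hreg : G.IsRegularOfDegree d) (x : ℝ) (hx : 0 ≤ x) (hd : 1 ≤ d) :
    (2 * (1 + x) ^ d - 1) * (∑ I ∈ Ind G, (#I : ℝ) * x ^ #I)
      ≤ n * x * (1 + x) ^ (d - 1) * ∑ I ∈ Ind G, x ^ #I := by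
  have h := sum_le_sum fun v (_ : v ∈ (univ : Finset (Fin n))) =>
    vertex_ineq G d hreg v x hx hd
  rw [sum_add_distrib, ← mul_sum, ← mul_sum] at h
  have e1 : ∑ v : Fin n, ∑ I ∈ Ind G with v ∈ I, x ^ #I = ∑ I ∈ Ind G, (#I : ℝ) * x ^ #I := by
    simp only [sum_filter]
    rw [sum_comm]
    refine sum_congr rfl fun I _ => ?_
    rw [← sum_filter]
    simp
  have e2 : ∑ v : Fin n, ∑ I ∈ Ind G, (#(I ∩ G.neighborFinset v) : ℝ) * x ^ #I
      = d * ∑ I ∈ Ind G, (#I : ℝ) * x ^ #I := by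
    rw [sum_comm, mul_sum]
    refine sum_congr rfl fun I _ => ?_
    rw [← sum_mul, ← mul_assoc]
    congr 1
    have : ∀ v, (#(I ∩ G.neighborFinset v) : ℝ) = ∑ u ∈ I, if G.Adj u v then 1 else 0 := by
      intro v
      rw [← sum_filter, sum_const, nsmul_eq_mul, mul_one]
      congr 2
      ext u
      simp [G.adj_comm]
    simp only [this]
    rw [sum_comm]
    rw [sum_congr rfl (g := fun _ => (d:ℝ))]
    · simp [mul_comm]
    · intro u _
      rw [← sum_filter, sum_const, nsmul_eq_mul, mul_one, ← hreg u]
      congr 2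
      ext w
      simp
  rw [e1, e2] at h
  simp only [sum_const, card_univ, Fintype.card_fin, nsmul_eq_mul] at h
  have hd' : (0:ℝ) < d := by exact_mod_cast hd
  refine le_of_mul_le_mul_left ?_ hd'
  linarith

lemma kahn_zhao (d : ℕ) (hreg : G.IsRegularOfDegree d) (x : ℝ) (hx : 0 ≤ x) (hd : 1 ≤ d) :
    ∑ I ∈ Ind G, x ^ #I ≤ (2 * (1 + x) ^ d - 1) ^ ((n : ℝ) / (2 * (d : ℝ))) := by
  have hd' : (0:ℝ) < d := by exact_mod_cast hd
  have hemp : ∅ ∈ Ind G := by simp [mem_Ind]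
  have hZ : ∀ t : ℝ, 0 ≤ t → 0 < ∑ I ∈ Ind G, t ^ #I := fun t ht => by
    have h := single_le_sum (f := fun I : Finset (Fin n) => t ^ #I)
      (fun i _ => pow_nonneg ht _) hemp
    simp only [card_empty, pow_zero] at h
    linarith
  have hD : ∀ t : ℝ, 0 ≤ t → 0 < 2 * (1 + t) ^ d - 1 := fun t ht => by
    have := one_le_pow₀ (show 1 ≤ 1 + t by linarith) (n := d)
    linarith
  have hder : ∀ t : ℝ, 0 ≤ t → HasDerivAt
      (fun t => (n:ℝ) / (2 * d) * Real.log (2 * (1 + t) ^ d - 1) - Real.log (∑ I ∈ Ind G, t ^ #I))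
      ((n:ℝ) / (2 * d) * ((2 * (d * (1 + t) ^ (d - 1))) / (2 * (1 + t) ^ d - 1))
        - (∑ I ∈ Ind G, (#I : ℝ) * t ^ (#I - 1)) / (∑ I ∈ Ind G, t ^ #I)) t := by
    intro t ht
    refine HasDerivAt.sub (HasDerivAt.const_mul _ (HasDerivAt.log ?_ (hD t ht).ne'))
      (HasDerivAt.log ?_ (hZ t ht).ne')
    · have h1 : HasDerivAt (fun t : ℝ => 1 + t) 1 t := (hasDerivAt_id t).const_add 1
      have := ((h1.pow d).const_mul 2).sub_const 1
      simpa using this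
    · exact HasDerivAt.fun_sum fun I _ => hasDerivAt_pow _ _
  have mono := monotoneOn_of_deriv_nonneg (convex_Ici (0:ℝ))
    (fun t ht => (hder t ht).continuousAt.continuousWithinAt)
    (fun t ht => (hder t (interior_subset ht)).differentiableAt.differentiableWithinAt)
    (by
      intro t ht
      rw [interior_Ici, Set.mem_Ioi] at ht
      rw [(hder t ht.le).deriv, sub_nonneg]
      have ho := occ G d hreg t ht.le hd
      have e : ∑ I ∈ Ind G, (#I : ℝ) * t ^ #I = t * ∑ I ∈ Ind G, (#I : ℝ) * t ^ (#I - 1) := by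
        rw [mul_sum]
        refine sum_congr rfl fun I _ => ?_
        rcases Nat.eq_zero_or_pos #I with h | h
        · simp [h]
        · obtain ⟨k, hk⟩ : ∃ k, #I = k + 1 := ⟨#I - 1, by omega⟩
          rw [hk, Nat.add_sub_cancel, pow_succ]
          ring
      rw [e] at ho
      have ho' : (2 * (1 + t) ^ d - 1) * (∑ I ∈ Ind G, (#I : ℝ) * t ^ (#I - 1))
          ≤ n * (1 + t) ^ (d - 1) * ∑ I ∈ Ind G, t ^ #I := by
        refine le_of_mul_le_mul_left ?_ ht
        linarith
      have e2 : (n:ℝ) / (2 * d) * ((2 * (d * (1 + t) ^ (d - 1))) / (2 * (1 + t) ^ d - 1))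
          = n * (1 + t) ^ (d - 1) / (2 * (1 + t) ^ d - 1) := by
        have := (hD t ht.le).ne'
        field_simp
      rw [e2, div_le_div_iff₀ (hZ t ht.le) (hD t ht.le)]
      linarith)
  have h := mono (Set.mem_Ici.2 le_rfl) (Set.mem_Ici.2 hx) hx
  have hz0 : ∑ I ∈ Ind G, (0:ℝ) ^ #I = 1 := by
    rw [sum_eq_single ∅]
    · simp
    · intro I _ hI
      simp [hI]
    · intro h; exact absurd hemp h
  have h1 : (2 * (1 + (0:ℝ)) ^ d - 1) = 1 := by norm_num
  simp only [hz0, h1, Real.log_one, mul_zero, sub_zero] at h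
  rw [Real.rpow_def_of_pos (hD x hx), ← Real.log_le_iff_le_exp (hZ x hx)]
  linarith

end graph

/-- for a `d`-regular graph `G` on `n` vertices (`d ≥ 3`), fugacity
`λ ∈ (0,1]`, hardcore partition function `Z(λ) = Σ_{S independent} λ^{|S|}` and a
maximum independent set `S*` (so `|S*| = α(G)`), the Gibbs measure satisfies
`π_λ(S*) = λ^{α(G)}/Z ≥ λ^{α(G)}/(2(1+λ)^d - 1)^{n/(2d)}`, and for any `m ≥ α(G)`,
`π_λ(S*) ≥ λ^m/(2(1+λ)^d - 1)^{n/(2d)}`. -/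
theorem stmt_16 {n : ℕ} (d : ℕ) (hd : 3 ≤ d) (G : SimpleGraph (Fin n))
    [DecidableRel G.Adj] (hreg : G.IsRegularOfDegree d)
    (lam : ℝ) (hlam : lam ∈ Set.Ioc (0:ℝ) 1)
    (Sstar : Finset (Fin n)) (hind : ∀ u ∈ Sstar, ∀ v ∈ Sstar, ¬G.Adj u v)
    (hmax : ∀ S : Finset (Fin n), (∀ u ∈ S, ∀ v ∈ S, ¬G.Adj u v) → S.card ≤ Sstar.card) :
    lam ^ Sstar.card /
        (∑ S ∈ univ.filter (fun S : Finset (Fin n) => ∀ u ∈ S, ∀ v ∈ S, ¬G.Adj u v),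
          lam ^ S.card)
      ≥ lam ^ Sstar.card / (2 * (1 + lam) ^ d - 1) ^ ((n : ℝ) / (2 * (d : ℝ))) ∧
    ∀ m : ℕ, Sstar.card ≤ m →
      lam ^ Sstar.card /
          (∑ S ∈ univ.filter (fun S : Finset (Fin n) => ∀ u ∈ S, ∀ v ∈ S, ¬G.Adj u v),
            lam ^ S.card)
        ≥ lam ^ m / (2 * (1 + lam) ^ d - 1) ^ ((n : ℝ) / (2 * (d : ℝ))) := by
  have hK := kahn_zhao G d hreg lam hlam.1.le (by omega)
  have hpos : 0 < ∑ I ∈ Ind G, lam ^ #I :=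
    sum_pos (fun I _ => pow_pos hlam.1 _) ⟨∅, by simp [mem_Ind]⟩
  unfold Ind at hK hpos
  refine ⟨?_, fun m hm => ?_⟩
  · exact div_le_div_of_nonneg_left (pow_nonneg hlam.1.le _) hpos hK
  · exact div_le_div₀ (pow_nonneg hlam.1.le _)
      (pow_le_pow_of_le_one hlam.1.le hlam.2 hm) hpos hK
end
end

section
/- Let H : {0,1}^n → ℝ with minimum E* = min_x H(x) < 0, and let β > 0, η ∈ (0,1), γ ∈ (0,1). Suppose the number of strings x with H(x) ≤ (1−η)E* is at most 2^{(1−γ)n}. Let π_β(x) = exp(−β·H(x))/Z(β) with Z(β) = Σ_x exp(−β·H(x)) be the Gibbs distribution at inverse temperature β. Then the probability under π_β of the set of global minimizers satisfies π_β({x : H(x) = E*}) ≥ 2^{−n} / ( exp(−β·η·|E*|) + 2^{−γn} ). -/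
open Finset
open scoped Classical

/-- Gibbs mass of the ground states. If the number of strings with
`H(x) ≤ (1-η)E*` is at most `2^{(1-γ)n}`, then the Gibbs distribution at inverse
temperature `β` gives the set of global minimisers mass at least
`2^{-n}/(exp(-βη|E*|) + 2^{-γn})`. -/
theorem stmt_17 (n : ℕ) (H : (Fin n → Bool) → ℝ) (Estar : ℝ)
    (hmin : IsLeast (Set.range H) Estar) (hEstar : Estar < 0)
    (β η γ : ℝ) (hβ : 0 < β) (hη : η ∈ Set.Ioo (0:ℝ) 1) (hγ : γ ∈ Set.Ioo (0:ℝ) 1)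
    (hcount : (((univ : Finset (Fin n → Bool)).filter fun x =>
        H x ≤ (1 - η) * Estar).card : ℝ) ≤ (2 : ℝ) ^ ((1 - γ) * (n : ℝ))) :
    (2 : ℝ) ^ (-(n : ℝ)) / (Real.exp (-β * η * |Estar|) + (2 : ℝ) ^ (-γ * (n : ℝ)))
      ≤ (∑ x ∈ (univ : Finset (Fin n → Bool)).filter fun x => H x = Estar,
            Real.exp (-β * H x)) /
          ∑ x : Fin n → Bool, Real.exp (-β * H x) := by
  obtain ⟨⟨x0, hx0⟩, hlb⟩ := hmin
  have hnum : Real.exp (-β * Estar) ≤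
      ∑ x ∈ (univ : Finset (Fin n → Bool)).filter (fun x => H x = Estar),
        Real.exp (-β * H x) := by
    have h := Finset.single_le_sum
      (s := (univ : Finset (Fin n → Bool)).filter (fun x => H x = Estar))
      (f := fun x => Real.exp (-β * H x)) (fun i _ => (Real.exp_pos _).le)
      (a := x0) (by simp [hx0])
    simpa only [hx0] using h
  have hpt : ∀ x ∈ (univ : Finset (Fin n → Bool)), Real.exp (-β * H x) ≤
      (if H x ≤ (1 - η) * Estar then Real.exp (-β * Estar) else 0)
        + Real.exp (-β * ((1 - η) * Estar)) := by
    intro x _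
    have hx : Estar ≤ H x := hlb ⟨x, rfl⟩
    split_ifs with h
    · have h1 : Real.exp (-β * H x) ≤ Real.exp (-β * Estar) :=
        Real.exp_le_exp.mpr (by nlinarith)
      have h2 := Real.exp_pos (-β * ((1 - η) * Estar))
      linarith
    · rw [zero_add]
      push Not at h
      exact Real.exp_le_exp.mpr (by nlinarith)
  have hsum := Finset.sum_le_sum hpt
  rw [Finset.sum_add_distrib, ← Finset.sum_filter, Finset.sum_const, Finset.sum_const,
    nsmul_eq_mul, nsmul_eq_mul] at hsum
  have hcard : ((univ : Finset (Fin n → Bool)).card : ℝ) = (2 : ℝ) ^ (n : ℝ) := by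
    simp [Real.rpow_natCast]
  rw [hcard] at hsum
  have hA := Real.exp_pos (-β * Estar)
  have hB : Real.exp (-β * ((1 - η) * Estar)) =
      Real.exp (-β * Estar) * Real.exp (-β * η * |Estar|) := by
    rw [← Real.exp_add, abs_of_neg hEstar]
    congr 1
    ring
  have hC : (2 : ℝ) ^ ((1 - γ) * (n : ℝ)) = (2 : ℝ) ^ (n : ℝ) * (2 : ℝ) ^ (-γ * (n : ℝ)) := by
    rw [← Real.rpow_add (by norm_num)]
    congr 1
    ring
  have hmul := mul_le_mul_of_nonneg_right hcount hA.le
  rw [hC] at hmul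
  rw [hB] at hsum
  have hZ : 0 < ∑ x : Fin n → Bool, Real.exp (-β * H x) :=
    Finset.sum_pos (fun i _ => Real.exp_pos _) ⟨x0, mem_univ _⟩
  have hN : (0 : ℝ) < (2 : ℝ) ^ (n : ℝ) := by positivity
  have hD : 0 < Real.exp (-β * η * |Estar|) + (2 : ℝ) ^ (-γ * (n : ℝ)) := by positivity
  have hZle : ∑ x : Fin n → Bool, Real.exp (-β * H x) ≤ (2 : ℝ) ^ (n : ℝ) *
      (Real.exp (-β * Estar) * (Real.exp (-β * η * |Estar|) + (2 : ℝ) ^ (-γ * (n : ℝ)))) := by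
    linarith
  rw [div_le_div_iff₀ hD hZ, Real.rpow_neg (by norm_num), inv_mul_le_iff₀ hN]
  refine hZle.trans ?_
  gcongr
end
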